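/- arXiv:1104.0440 — 3 statements merged into one kernel-verified Lean document; each statement's English description precedes it below -/
import Mathlib

section
/- Let T > 0 and let A: ℝ → ℝ be C¹ and T-periodic, with at least one zero in [0,T], with min_{t∈[0,T]} A′(t) > −1/4, and assume all zeros of A are simple (A′(t) ≠ 0 whenever A(t) = 0). Then the normal form equation (NF) has exactly one T-periodic solution with nonconstant sign. -/
/-!
For `x < 0` the square `y = x ^ 2` turns (NF) into `y' = 2 * (A - √y)`, whose right-hand side is
continuous, although not Lipschitz, and antitone in `y`. Started from `0` at a zero of `A`, it has
a solution, which is squeezed between `0` and `(2 * A) ^ 2` because `A' ≥ -1/4`. The symmetry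
`f ↦ -f (-·)` exchanges the intervals where `A` is positive with those where it is negative, so
`x` can be glued from negative square roots and their reflections; the gluing satisfies (NF)
wherever `A` does not vanish.

At a zero `e` of `A` with slope `α`, put `R s = exp s * x (e + exp (-s))` and similarly `B` for `A`.
Then `R' = R - 1 - B / R` with `B → α`, and `(R - l) ^ 2`, where `l` is the smaller root of
`l ^ 2 = α + l`, is a Lyapunov function, forwards in time if `α < 0` and backwards if `α > 0`.
Hence `x` has the derivative `l` at `e`.

Conversely, a solution with zeros on both sides of `t` satisfies the same bound by `2 * A`, by
comparison with `-2 * A` from the last zero. Two such solutions agree: starting from a common zero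
at which `A` becomes positive, `x ^ 2 - y ^ 2` has derivative `2 * (x - y)`, which is negative as
long as `x ^ 2 - y ^ 2` is positive.
-/

open Set Filter Topology

namespace AbelNF

lemma exists_zero_forall_Ioc_pos {f : ℝ → ℝ} {a t : ℝ} (hf : ContinuousOn f (Icc a t))
    (hat : a ≤ t) (ha : f a ≤ 0) (ht : 0 < f t) :
    ∃ c ∈ Ico a t, f c = 0 ∧ ∀ s ∈ Ioc c t, 0 < f s := by
  have hclosed : IsClosed (Icc a t ∩ f ⁻¹' Iic 0) :=
    hf.preimage_isClosed_of_isClosed isClosed_Icc isClosed_Iic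
  obtain ⟨c, ⟨hc, hfc⟩, hmax⟩ := (isCompact_Icc.of_isClosed_subset hclosed
    inter_subset_left).exists_isGreatest ⟨a, left_mem_Icc.2 hat, ha⟩
  have hpos : ∀ s ∈ Ioc c t, 0 < f s := fun s hs => by
    by_contra! h
    exact hs.1.not_ge (hmax ⟨⟨hc.1.trans hs.1.le, hs.2⟩, h⟩)
  have hct : c < t := hc.2.lt_of_ne fun h => ht.not_ge (h ▸ hfc)
  obtain ⟨z, hz, hfz⟩ := intermediate_value_Icc hct.le (hf.mono (Icc_subset_Icc_left hc.1))
    ⟨hfc, ht.le⟩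
  have hzc : z = c := by
    by_contra h
    exact (hpos z ⟨hz.1.lt_of_ne' h, hz.2⟩).ne' hfz
  exact ⟨c, ⟨hc.1, hct⟩, hzc ▸ hfz, hpos⟩

lemma nonpos_of_hasDerivAt_nonpos_of_pos {d d' : ℝ → ℝ} {a b : ℝ} (hc : ContinuousOn d (Icc a b))
    (hd : ∀ t ∈ Ioo a b, HasDerivAt d (d' t) t) (ha : d a ≤ 0)
    (h : ∀ t ∈ Ioo a b, 0 < d t → d' t ≤ 0) {t : ℝ} (ht : t ∈ Icc a b) : d t ≤ 0 := by
  by_contra! hpos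
  obtain ⟨c, hct, hdc, hposc⟩ :=
    exists_zero_forall_Ioc_pos (hc.mono (Icc_subset_Icc_right ht.2)) ht.1 ha hpos
  have hsub : Ioo c t ⊆ Ioo a b := Ioo_subset_Ioo hct.1 ht.2
  have hanti : AntitoneOn d (Icc c t) := by
    refine antitoneOn_of_hasDerivWithinAt_nonpos (f' := d') (convex_Icc c t)
      (hc.mono (Icc_subset_Icc hct.1 ht.2)) ?_ ?_ <;> rw [interior_Icc] <;> intro s hs
    · exact (hd s (hsub hs)).hasDerivWithinAt
    · exact h s (hsub hs) (hposc s (Ioo_subset_Ioc_self hs))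
  have := hanti (left_mem_Icc.2 hct.2.le) (right_mem_Icc.2 hct.2.le) hct.2.le
  linarith

lemma exists_hasDerivWithinAt_of_lipschitz_of_bounded {E : Type*} [NormedAddCommGroup E]
    [NormedSpace ℝ E] [CompleteSpace E] {v : ℝ → E → E} {K : NNReal} {L : ℝ} {a b : ℝ}
    (hab : a ≤ b) (hlip : ∀ t ∈ Icc a b, LipschitzWith K (v t))
    (hcont : ∀ y, ContinuousOn (v · y) (Icc a b)) (hbound : ∀ t ∈ Icc a b, ∀ y, ‖v t y‖ ≤ L)
    (y₀ : E) :
    ∃ y : ℝ → E, y a = y₀ ∧ ∀ t ∈ Icc a b, HasDerivWithinAt y (v t (y t)) (Icc a b) t := by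
  have hL : 0 ≤ L := (norm_nonneg _).trans (hbound a (left_mem_Icc.2 hab) 0)
  have hba : 0 ≤ b - a := sub_nonneg.2 hab
  have hP : IsPicardLindelof v (tmin := a) (tmax := b) ⟨a, left_mem_Icc.2 hab⟩ y₀
      ⟨L * (b - a), by positivity⟩ 0 ⟨L, hL⟩ K :=
    { lipschitzOnWith := fun t ht => (hlip t ht).lipschitzOnWith
      continuousOn := fun y _ => hcont y
      norm_le := fun t ht y _ => hbound t ht y
      mul_max_le := by
        rw [sub_self, max_eq_left hba, NNReal.coe_zero, sub_zero]
        rfl }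
  exact hP.exists_eq_forall_mem_Icc_hasDerivWithinAt₀

lemma sub_le_mul_of_monotone_of_sub_le {g φ ψ y z : ℝ → ℝ} {a b ε : ℝ} (hφ : Monotone φ)
    (hε : 0 ≤ ε) (hφψ : ∀ u, φ u - ψ u ≤ ε) (hyc : ContinuousOn y (Icc a b))
    (hzc : ContinuousOn z (Icc a b)) (hy : ∀ t ∈ Ioo a b, HasDerivAt y (g t - φ (y t)) t)
    (hz : ∀ t ∈ Ioo a b, HasDerivAt z (g t - ψ (z t)) t) (hyz : y a = z a) {t : ℝ}
    (ht : t ∈ Icc a b) : z t - y t ≤ ε * (t - a) := by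
  have hdiff := nonpos_of_hasDerivAt_nonpos_of_pos (d := fun t => z t - y t - ε * (t - a))
    (by fun_prop)
    (fun s hs => ((hz s hs).sub (hy s hs)).sub (((hasDerivAt_id s).sub_const a).const_mul ε))
    (by simp [hyz]) (fun s hs hpos => ?_) ht
  · linarith
  · have hyz' : y s ≤ z s := by nlinarith [hs.1]
    linarith [hφ hyz', hφψ (z s)]

lemma hasDerivAt_of_tendstoUniformlyOn_field {g ψ y : ℝ → ℝ} {φ Y : ℕ → ℝ → ℝ} {s : Set ℝ}
    (hs : IsOpen s) (hφ : TendstoUniformly φ ψ atTop) (hψ : UniformContinuous ψ)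
    (hY : TendstoUniformlyOn Y y atTop s)
    (hode : ∀ n, ∀ t ∈ s, HasDerivAt (Y n) (g t - φ n (Y n t)) t) {t : ℝ} (ht : t ∈ s) :
    HasDerivAt y (g t - ψ (y t)) t := by
  refine hasDerivAt_of_tendstoUniformlyOn (f' := fun n t => g t - φ n (Y n t))
    (g' := fun t => g t - ψ (y t)) hs (Metric.tendstoUniformlyOn_iff.2 fun ε hε => ?_)
    (.of_forall hode) (fun t ht => hY.tendsto_at ht) ht
  filter_upwards [Metric.tendstoUniformly_iff.1 hφ (ε / 2) (by positivity),
    Metric.tendstoUniformlyOn_iff.1 (hψ.comp_tendstoUniformlyOn hY) (ε / 2) (by positivity)]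
    with n hn hn' t ht
  rw [dist_sub_left]
  calc dist (ψ (y t)) (φ n (Y n t))
      ≤ dist (ψ (y t)) (ψ (Y n t)) + dist (ψ (Y n t)) (φ n (Y n t)) := dist_triangle _ _ _
    _ < ε / 2 + ε / 2 := add_lt_add (hn' t ht) (hn _)
    _ = ε := add_halves ε

lemma uniformCauchySeqOn_of_monotone_field {g : ℝ → ℝ} {φ Y : ℕ → ℝ → ℝ} {a b y₀ : ℝ}
    (hmono : ∀ n, Monotone (φ n)) (hφ : UniformCauchySeqOn φ atTop univ)
    (hc : ∀ n, ContinuousOn (Y n) (Icc a b)) (ha : ∀ n, Y n a = y₀)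
    (hode : ∀ n, ∀ t ∈ Ioo a b, HasDerivAt (Y n) (g t - φ n (Y n t)) t) :
    UniformCauchySeqOn Y atTop (Icc a b) := by
  rw [Metric.uniformCauchySeqOn_iff] at hφ ⊢
  intro ε hε
  set ρ := ε / (|b - a| + 1)
  have hρ : 0 < ρ := by positivity
  obtain ⟨N, hN⟩ := hφ ρ hρ
  refine ⟨N, fun m hm n hn t ht => ?_⟩
  have hclose : ∀ m ≥ N, ∀ n ≥ N, Y n t - Y m t ≤ ρ * (t - a) := fun m hm n hn =>
    sub_le_mul_of_monotone_of_sub_le (hmono m) hρ.le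
      (fun u => (le_abs_self _).trans (hN m hm n hn u (mem_univ u)).le)
      (hc m) (hc n) (hode m) (hode n) ((ha m).trans (ha n).symm) ht
  calc dist (Y m t) (Y n t) ≤ ρ * (t - a) :=
        abs_sub_le_iff.2 ⟨hclose n hn m hm, hclose m hm n hn⟩
    _ < ρ * (|b - a| + 1) := by
        gcongr
        linarith [ht.2, le_abs_self (b - a)]
    _ = ε := div_mul_cancel₀ _ (by positivity)

lemma exists_hasDerivAt_of_tendstoUniformly_monotone {g ψ : ℝ → ℝ} {φ : ℕ → ℝ → ℝ} {a b : ℝ}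
    (hab : a ≤ b) (hg : ContinuousOn g (Icc a b)) (hmono : ∀ n, Monotone (φ n))
    (hlip : ∀ n, ∃ K, LipschitzWith K (φ n)) (hbdd : ∀ n, ∃ M, ∀ u, |φ n u| ≤ M)
    (hφ : TendstoUniformly φ ψ atTop) (y₀ : ℝ) :
    ∃ y : ℝ → ℝ, y a = y₀ ∧ ContinuousOn y (Icc a b) ∧
      ∀ t ∈ Ioo a b, HasDerivAt y (g t - ψ (y t)) t := by
  obtain ⟨C, hC⟩ := isCompact_Icc.exists_bound_of_continuousOn hg
  choose K hK using hlip
  choose M hM using hbdd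
  have hψ : UniformContinuous ψ :=
    hφ.uniformContinuous (.of_forall fun n => (hK n).uniformContinuous)
  have hpicard : ∀ n, ∃ y : ℝ → ℝ, y a = y₀ ∧
      ∀ t ∈ Icc a b, HasDerivWithinAt y (g t - φ n (y t)) (Icc a b) t := fun n =>
    exists_hasDerivWithinAt_of_lipschitz_of_bounded (v := fun t u => g t - φ n u) hab
      (fun t _ => (LipschitzWith.const (g t)).sub (hK n)) (fun u => hg.sub continuousOn_const)
      (fun t ht u => (norm_sub_le _ _).trans (add_le_add (hC t ht) (hM n u))) y₀
  choose Y hYa hY using hpicard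
  have hYc : ∀ n, ContinuousOn (Y n) (Icc a b) := fun n t ht => (hY n t ht).continuousWithinAt
  have hYd : ∀ n, ∀ t ∈ Ioo a b, HasDerivAt (Y n) (g t - φ n (Y n t)) t := fun n t ht =>
    (hY n t (Ioo_subset_Icc_self ht)).hasDerivAt (Icc_mem_nhds ht.1 ht.2)
  have hcauchy : UniformCauchySeqOn Y atTop (Icc a b) :=
    uniformCauchySeqOn_of_monotone_field hmono
      (tendstoUniformlyOn_univ.2 hφ).uniformCauchySeqOn hYc hYa hYd
  choose! y hy using fun (t : ℝ) (ht : t ∈ Icc a b) =>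
    cauchySeq_tendsto_of_complete (hcauchy.cauchySeq ht)
  have hlim : TendstoUniformlyOn Y y atTop (Icc a b) := hcauchy.tendstoUniformlyOn_of_tendsto hy
  refine ⟨y, ?_, hlim.continuousOn (.of_forall hYc), fun t ht =>
    hasDerivAt_of_tendstoUniformlyOn_field isOpen_Ioo hφ hψ (hlim.mono Ioo_subset_Icc_self)
      hYd ht⟩
  exact tendsto_nhds_unique (hy a (left_mem_Icc.2 hab)) (by simp [hYa])

lemma abs_sqrt_max_sub_sqrt_le (y δ : ℝ) : |√(max y δ) - √y| ≤ √δ := by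
  rcases le_total y δ with h | h
  · rw [max_eq_right h, abs_of_nonneg (sub_nonneg.2 (Real.sqrt_le_sqrt h))]
    linarith [Real.sqrt_nonneg y]
  · simp [max_eq_left h]

lemma lipschitzWith_sqrt_max {δ : ℝ} (hδ : 0 < δ) :
    LipschitzWith (Real.toNNReal (1 / √δ)) fun y => √(max y δ) := by
  refine LipschitzWith.of_dist_le_mul fun y z => ?_
  have hsδ : 0 < √δ := Real.sqrt_pos.2 hδ
  have hy : √δ ≤ √(max y δ) := Real.sqrt_le_sqrt (le_max_right _ _)
  have hz : √δ ≤ √(max z δ) := Real.sqrt_le_sqrt (le_max_right _ _)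
  rw [Real.coe_toNNReal _ (by positivity), Real.dist_eq, Real.dist_eq, one_div,
    ← div_eq_inv_mul, le_div_iff₀ hsδ]
  calc |√(max y δ) - √(max z δ)| * √δ
      ≤ |√(max y δ) - √(max z δ)| * (√(max y δ) + √(max z δ)) := by gcongr; linarith
    _ = |(√(max y δ) - √(max z δ)) * (√(max y δ) + √(max z δ))| := by
        rw [abs_mul, abs_of_nonneg (a := √(max y δ) + √(max z δ)) (by positivity)]
    _ = |max y δ - max z δ| := by
        congr 1
        linear_combination Real.sq_sqrt (hδ.le.trans (le_max_right y δ)) -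
          Real.sq_sqrt (hδ.le.trans (le_max_right z δ))
    _ ≤ |y - z| := abs_max_sub_max_le_abs y z δ

lemma exists_hasDerivAt_sub_min_sqrt {g : ℝ → ℝ} {a b C : ℝ} (hab : a ≤ b)
    (hg : ContinuousOn g (Icc a b)) (hC : 0 ≤ C) (y₀ : ℝ) :
    ∃ y : ℝ → ℝ, y a = y₀ ∧ ContinuousOn y (Icc a b) ∧
      ∀ t ∈ Ioo a b, HasDerivAt y (g t - 2 * min √(y t) C) t := by
  set δ : ℕ → ℝ := fun n => 1 / ((n : ℝ) + 1)
  have hδ : ∀ n, 0 < δ n := fun n => Nat.one_div_pos_of_nat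
  refine exists_hasDerivAt_of_tendstoUniformly_monotone (ψ := fun u => 2 * min √u C)
    (φ := fun n u => 2 * min √(max u (δ n)) C) hab hg (fun n u v h => by dsimp only; gcongr)
    (fun n => ⟨_, (lipschitzWith_smul (2 : ℝ)).comp ((lipschitzWith_sqrt_max (hδ n)).min_const C)⟩)
    (fun n => ⟨2 * C, fun u => ?_⟩) (Metric.tendstoUniformly_iff.2 fun ε hε => ?_) y₀
  · rw [abs_of_nonneg (by positivity)]
    gcongr
    exact min_le_right _ _
  · have hlim : Tendsto (fun n => 2 * √(δ n)) atTop (𝓝 0) := by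
      simpa only [Real.sqrt_zero, mul_zero] using
        (tendsto_one_div_add_atTop_nhds_zero_nat (𝕜 := ℝ)).sqrt.const_mul 2
    filter_upwards [hlim.eventually_lt_const hε] with n hn u
    calc dist (2 * min √u C) (2 * min √(max u (δ n)) C)
        = 2 * |min √(max u (δ n)) C - min √u C| := by
          rw [dist_comm, Real.dist_eq, ← mul_sub, abs_mul, abs_two]
      _ ≤ 2 * √(δ n) := by
          gcongr
          exact (abs_min_sub_min_le_max _ _ _ _).trans
            (max_le (abs_sqrt_max_sub_sqrt_le u (δ n)) (by simp))
      _ < ε := hn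

/-- The symmetry `f ↦ -f (-·)`: applied to both `A` and `x` it maps (NF) to itself, reversing time
and exchanging positive and negative values. -/
def reflect (f : ℝ → ℝ) (t : ℝ) : ℝ := -f (-t)

/-- `x` satisfies (NF) at the time `t`. -/
def SolvesAt (A x : ℝ → ℝ) (t : ℝ) : Prop :=
  DifferentiableAt ℝ x t ∧ x t * deriv x t = A t + x t

/-- `x t` lies between `0` and `-2 * A t`, written as one polynomial inequality so that the two
signs of `A t` need not be distinguished. -/
def IsTrappedAt (A x : ℝ → ℝ) (t : ℝ) : Prop :=
  x t * (x t + 2 * A t) ≤ 0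

@[simp]
lemma reflect_reflect (f : ℝ → ℝ) : reflect (reflect f) = f := by
  ext t
  simp [reflect]

lemma hasDerivWithinAt_reflect {f : ℝ → ℝ} {f' t : ℝ} {s : Set ℝ}
    (h : HasDerivWithinAt f f' s (-t)) : HasDerivWithinAt (reflect f) f' (Neg.neg ⁻¹' s) t := by
  have hcomp : HasDerivWithinAt (fun u => -f (-u)) (-((-1 : ℝ) • f')) (Neg.neg ⁻¹' s) t :=
    (h.scomp t (hasDerivAt_neg t).hasDerivWithinAt fun _ hu => hu).fun_neg
  rwa [neg_one_smul, neg_neg] at hcomp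

lemma hasDerivAt_reflect {f : ℝ → ℝ} {f' t : ℝ} (h : HasDerivAt f f' (-t)) :
    HasDerivAt (reflect f) f' t := by
  rw [← hasDerivWithinAt_univ] at h ⊢
  simpa using hasDerivWithinAt_reflect h

lemma deriv_reflect (f : ℝ → ℝ) (t : ℝ) : deriv (reflect f) t = deriv f (-t) := by
  change deriv (fun s => -f (-s)) t = _
  rw [deriv.fun_neg, deriv_comp_neg, neg_neg]

lemma differentiable_reflect {f : ℝ → ℝ} (hf : Differentiable ℝ f) :
    Differentiable ℝ (reflect f) :=
  fun t => (hasDerivAt_reflect (hf (-t)).hasDerivAt).differentiableAt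

lemma SolvesAt.reflect {A x : ℝ → ℝ} {t : ℝ} (h : SolvesAt A x (-t)) :
    SolvesAt (reflect A) (reflect x) t := by
  refine ⟨(hasDerivAt_reflect h.1.hasDerivAt).differentiableAt, ?_⟩
  rw [deriv_reflect, AbelNF.reflect, AbelNF.reflect, neg_mul, h.2, neg_add]

lemma IsTrappedAt.reflect {A x : ℝ → ℝ} {t : ℝ} (h : IsTrappedAt A x (-t)) :
    IsTrappedAt (reflect A) (reflect x) t := by
  unfold IsTrappedAt AbelNF.reflect at *
  linarith

lemma SolvesAt.congr {A x y : ℝ → ℝ} {t : ℝ} (h : SolvesAt A x t) (hxy : y =ᶠ[𝓝 t] x) :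
    SolvesAt A y t := by
  refine ⟨h.1.congr_of_eventuallyEq hxy, ?_⟩
  rw [hxy.deriv_eq, hxy.eq_of_nhds, h.2]

lemma SolvesAt.comp_sub_const {A x : ℝ → ℝ} {t c : ℝ} (h : SolvesAt A x (t - c))
    (hA : A (t - c) = A t) : SolvesAt A (fun s => x (s - c)) t := by
  refine ⟨differentiableAt_comp_sub_const.2 h.1, ?_⟩
  rw [deriv_comp_sub_const, h.2, hA]

lemma IsTrappedAt.eq_zero {A x : ℝ → ℝ} {t : ℝ} (h : IsTrappedAt A x t) (ht : A t = 0) :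
    x t = 0 := by
  unfold IsTrappedAt at h
  nlinarith

lemma IsTrappedAt.abs_le {A x : ℝ → ℝ} {t : ℝ} (h : IsTrappedAt A x t) :
    |x t| ≤ 2 * |A t| := by
  unfold IsTrappedAt at h
  rw [← abs_two, ← abs_mul]
  exact sq_le_sq.1 (by nlinarith)

lemma IsTrappedAt.nonpos {A x : ℝ → ℝ} {t : ℝ} (h : IsTrappedAt A x t) (ht : 0 < A t) :
    x t ≤ 0 := by
  unfold IsTrappedAt at h
  by_contra! hx
  nlinarith

lemma isTrappedAt_of_nonpos {A x : ℝ → ℝ} {t : ℝ} (hx : x t ≤ 0) (h : -x t ≤ 2 * A t) :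
    IsTrappedAt A x t :=
  mul_nonpos_of_nonpos_of_nonneg hx (by linarith)

lemma hasDerivAt_max_zero_sq (z : ℝ) : HasDerivAt (fun z => max z 0 ^ 2) (2 * max z 0) z := by
  have hne : ∀ z ≠ 0, HasDerivAt (fun z : ℝ => max z 0 ^ 2) (2 * max z 0) z := fun z hz => by
    rcases hz.lt_or_gt with hz | hz
    · rw [max_eq_right hz.le, mul_zero]
      refine (hasDerivAt_const z 0).congr_of_eventuallyEq ?_
      filter_upwards [Iio_mem_nhds hz] with w hw
      simp [max_eq_right (mem_Iio.1 hw).le]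
    · rw [max_eq_left hz.le]
      refine HasDerivAt.congr_of_eventuallyEq (by simpa using hasDerivAt_pow 2 z) ?_
      filter_upwards [Ioi_mem_nhds hz] with w hw
      rw [max_eq_left (mem_Ioi.1 hw).le]
  rcases eq_or_ne z 0 with rfl | hz
  · exact hasDerivAt_of_hasDerivAt_of_ne (g := fun z => 2 * max z 0) hne (by fun_prop)
      (by fun_prop)
  · exact hne z hz

lemma exists_square_of_neg_solution {A : ℝ → ℝ} (hA : Differentiable ℝ A)
    (hA' : ∀ t, -(1 / 4) ≤ deriv A t) {a b : ℝ} (hab : a ≤ b) :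
    ∃ y : ℝ → ℝ, (∀ t ∈ Icc a b, 0 ≤ y t ∧ y t ≤ 4 * max (A t) 0 ^ 2) ∧
      ∀ t ∈ Ioo a b, HasDerivAt y (2 * (max (A t) 0 - √(y t))) t := by
  obtain ⟨B, hB⟩ := isCompact_Icc.exists_bound_of_continuousOn (hA.continuous.continuousOn
    (s := Icc a b))
  have hB0 : 0 ≤ B := (norm_nonneg _).trans (hB a (left_mem_Icc.2 hab))
  have hAB : ∀ t ∈ Icc a b, max (A t) 0 ≤ B := fun t ht =>
    max_le ((le_abs_self _).trans (hB t ht)) hB0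
  obtain ⟨y, hya, hyc, hy⟩ := exists_hasDerivAt_sub_min_sqrt (g := fun t => 2 * max (A t) 0)
    (C := 2 * B) hab (by have := hA.continuous; fun_prop) (by positivity) 0
  have hnonneg : ∀ t ∈ Icc a b, 0 ≤ y t := fun t ht => by
    refine neg_nonpos.1 (nonpos_of_hasDerivAt_nonpos_of_pos (d := fun t => -y t) hyc.neg
      (fun s hs => (hy s hs).fun_neg) (by simp [hya]) (fun s _ hneg => ?_) ht)
    rw [Real.sqrt_eq_zero_of_nonpos (by linarith), min_eq_left (by positivity)]
    linarith [le_max_right (A s) 0]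
  have hle : ∀ t ∈ Icc a b, y t ≤ 4 * max (A t) 0 ^ 2 := fun t ht => by
    refine sub_nonpos.1 (nonpos_of_hasDerivAt_nonpos_of_pos
      (d := fun t => y t - 4 * max (A t) 0 ^ 2) (by have := hA.continuous; fun_prop)
      (fun s hs => (hy s hs).fun_sub
        (((hasDerivAt_max_zero_sq (A s)).comp s (hA s).hasDerivAt).const_mul 4))
      (by rw [hya]; nlinarith [sq_nonneg (max (A a) 0)]) (fun s hs hpos => ?_) ht)
    have hmin : 2 * max (A s) 0 ≤ min √(y s) (2 * B) :=
      le_min (Real.le_sqrt_of_sq_le (by linarith))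
        (by linarith [hAB s (Ioo_subset_Icc_self hs)])
    nlinarith [hA' s, le_max_right (A s) 0]
  refine ⟨y, fun t ht => ⟨hnonneg t ht, hle t ht⟩, fun t ht => ?_⟩
  have ht' := Ioo_subset_Icc_self ht
  have hsqrt : √(y t) ≤ 2 * B :=
    Real.sqrt_le_iff.2 ⟨by positivity, by nlinarith [hle t ht', hAB t ht', le_max_right (A t) 0]⟩
  simpa only [min_eq_left hsqrt, mul_sub] using hy t ht

lemma solvesAt_neg_sqrt {A y : ℝ → ℝ} {t : ℝ} (hy : HasDerivAt y (2 * (A t - √(y t))) t)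
    (hpos : 0 < y t) : SolvesAt A (fun s => -√(y s)) t := by
  have hx : HasDerivAt (fun s => -√(y s)) (-(2 * (A t - √(y t)) / (2 * √(y t)))) t :=
    (hy.sqrt hpos.ne').neg
  refine ⟨hx.differentiableAt, ?_⟩
  have hsqrt : √(y t) ≠ 0 := (Real.sqrt_pos.2 hpos).ne'
  rw [hx.deriv]
  field_simp
  ring

lemma exists_trapped_solution_of_pos {A : ℝ → ℝ} (hA : Differentiable ℝ A)
    (hA' : ∀ t, -(1 / 4) ≤ deriv A t) {a b : ℝ} (hab : a ≤ b) (ha : A a = 0) (hb : A b = 0) :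
    ∃ x : ℝ → ℝ, ∀ t ∈ Icc a b, 0 < A t → IsTrappedAt A x t ∧ SolvesAt A x t := by
  obtain ⟨y, hbounds, hy⟩ := exists_square_of_neg_solution hA hA' hab
  refine ⟨fun t => -√(y t), fun t ht hAt => ?_⟩
  have ht' : t ∈ Ioo a b := ⟨ht.1.lt_of_ne fun h => hAt.ne' (h ▸ ha),
    ht.2.lt_of_ne fun h => hAt.ne' (h ▸ hb)⟩
  have hderiv := hy t ht'
  obtain ⟨hnonneg, hle⟩ := hbounds t ht
  rw [max_eq_left hAt.le] at hderiv hle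
  have hpos : 0 < y t := by
    refine hnonneg.lt_of_ne' fun h0 => ?_
    have hmin : IsLocalMin y t := by
      filter_upwards [Icc_mem_nhds ht'.1 ht'.2] with s hs
      exact h0 ▸ (hbounds s hs).1
    have := hmin.hasDerivAt_eq_zero hderiv
    rw [h0, Real.sqrt_zero] at this
    linarith
  refine ⟨isTrappedAt_of_nonpos (by simp) ?_, solvesAt_neg_sqrt hderiv hpos⟩
  rw [neg_neg]
  exact Real.sqrt_le_iff.2 ⟨by positivity, by linarith⟩

lemma exists_trapped_solution_Icc {A : ℝ → ℝ} (hA : Differentiable ℝ A)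
    (hA' : ∀ t, -(1 / 4) ≤ deriv A t) {a b : ℝ} (hab : a ≤ b) (ha : A a = 0) (hb : A b = 0) :
    ∃ x : ℝ → ℝ, ∀ t ∈ Icc a b, IsTrappedAt A x t ∧ (A t ≠ 0 → SolvesAt A x t) := by
  obtain ⟨p, hp⟩ := exists_trapped_solution_of_pos hA hA' hab ha hb
  obtain ⟨q, hq⟩ := exists_trapped_solution_of_pos (differentiable_reflect hA)
    (fun t => by rw [deriv_reflect]; exact hA' (-t)) (neg_le_neg hab) (by simp [reflect, hb])
    (by simp [reflect, ha])
  have hq' : ∀ t ∈ Icc a b, A t < 0 → IsTrappedAt A (reflect q) t ∧ SolvesAt A (reflect q) t :=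
    fun t ht hAt => by
      obtain ⟨htrap, hsol⟩ := hq (-t) ⟨neg_le_neg ht.2, neg_le_neg ht.1⟩ (by simpa [reflect])
      simpa only [reflect_reflect] using And.intro htrap.reflect hsol.reflect
  refine ⟨fun t => if 0 < A t then p t else if A t < 0 then reflect q t else 0, fun t ht => ?_⟩
  rcases lt_trichotomy (A t) 0 with hneg | hzero | hpos
  · refine ⟨by simpa [IsTrappedAt, hneg, hneg.not_gt] using (hq' t ht hneg).1,
      fun _ => (hq' t ht hneg).2.congr ?_⟩
    filter_upwards [hA.continuous.continuousAt.eventually_lt_const hneg] with s hs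
    simp [hs, hs.not_gt]
  · exact ⟨by simp [IsTrappedAt, hzero], fun h => (h hzero).elim⟩
  · refine ⟨by simpa [IsTrappedAt, hpos] using (hp t ht hpos).1,
      fun _ => (hp t ht hpos).2.congr ?_⟩
    filter_upwards [hA.continuous.continuousAt.eventually_const_lt hpos] with s hs
    simp [hs]

lemma exists_periodic_trapped_solution {A : ℝ → ℝ} {T : ℝ} (hT : 0 < T)
    (hA : Differentiable ℝ A) (hAper : Function.Periodic A T) (hzero : ∃ e, A e = 0)
    (hA' : ∀ t, -(1 / 4) ≤ deriv A t) :
    ∃ x : ℝ → ℝ, Function.Periodic x T ∧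
      ∀ t, IsTrappedAt A x t ∧ (A t ≠ 0 → SolvesAt A x t) := by
  obtain ⟨e, he⟩ := hzero
  have hAsub : ∀ (k : ℤ) (t : ℝ), A (t - k • T) = A t := fun k t => hAper.sub_zsmul_eq k
  obtain ⟨X, hX⟩ := exists_trapped_solution_Icc hA hA' (a := e) (b := e + T) (by linarith) he
    (by rw [hAper, he])
  refine ⟨fun t => X (toIcoMod hT e t), fun t => by simp, fun t => ?_⟩
  obtain ⟨htrap, hsol⟩ := hX (toIcoMod hT e t) (Ico_subset_Icc_self (toIcoMod_mem_Ico hT e t))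
  have hAmod : A (toIcoMod hT e t) = A t := hAsub _ t
  refine ⟨by simpa only [IsTrappedAt, hAmod] using htrap, fun hAt => ?_⟩
  have hne : ¬ t ≡ e [PMOD T] := fun h =>
    hAt (by rw [← hAmod, (AddCommGroup.modEq_iff_toIcoMod_eq_left hT).1 h.symm, he])
  refine ((hsol (hAmod ▸ hAt)).comp_sub_const hAmod).congr ?_
  filter_upwards [eventuallyEq_toIcoDiv_nhds hT e hne] with s hs
  rw [toIcoMod, hs]

lemma le_of_hasDerivAt_le_neg {f f' : ℝ → ℝ} {a b c K κ : ℝ} (hab : a < b)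
    (hc : ContinuousOn f (Icc a b)) (hf : ∀ t ∈ Ioo a b, HasDerivAt f (f' t) t) (ha : f a ≤ K)
    (hcK : c ≤ K) (hK : K - c ≤ κ * (b - a)) (h : ∀ t ∈ Ioo a b, c ≤ f t → f' t ≤ -κ) :
    f b ≤ c := by
  have hba : 0 < b - a := sub_pos.2 hab
  set m := (K - c) / (b - a)
  have hm : m * (b - a) = K - c := div_mul_cancel₀ _ hba.ne'
  have hm0 : 0 ≤ m := div_nonneg (sub_nonneg.2 hcK) hba.le
  have hmκ : m ≤ κ := (div_le_iff₀ hba).2 hK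
  have hb := nonpos_of_hasDerivAt_nonpos_of_pos (d := fun t => f t - (K - m * (t - a)))
    (by fun_prop)
    (fun t ht => (hf t ht).sub ((((hasDerivAt_id t).sub_const a).const_mul m).const_sub K))
    (by simpa using ha) (fun t ht hpos => ?_) (right_mem_Icc.2 hab.le)
  · linarith
  · have hct : c ≤ f t := by nlinarith [mul_nonneg hm0 (sub_nonneg.2 ht.2.le)]
    linarith [h t ht hct]

lemma eventually_le_of_hasDerivAt_le_neg {f f' : ℝ → ℝ} {c κ : ℝ} (hκ : 0 < κ)
    (hf : ∀ᶠ t in atTop, HasDerivAt f (f' t) t)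
    (h : ∀ᶠ t in atTop, c ≤ f t → f' t ≤ -κ) : ∀ᶠ t in atTop, f t ≤ c := by
  obtain ⟨a, ha⟩ := eventually_atTop.1 (hf.and h)
  filter_upwards [eventually_gt_atTop a, eventually_ge_atTop (a + (max (f a) c - c) / κ)]
    with b hab hb
  refine le_of_hasDerivAt_le_neg (κ := κ) hab
    (fun t ht => (ha t ht.1).1.continuousAt.continuousWithinAt)
    (fun t ht => (ha t ht.1.le).1) (le_max_left _ _) (le_max_right _ _) ?_
    (fun t ht => (ha t ht.1.le).2)
  rw [← div_le_iff₀' hκ]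
  linarith

lemma eventually_le_of_le_hasDerivAt {f f' : ℝ → ℝ} {c K κ : ℝ} (hκ : 0 < κ)
    (hf : ∀ᶠ t in atTop, HasDerivAt f (f' t) t) (hK : ∀ᶠ t in atTop, f t ≤ K)
    (h : ∀ᶠ t in atTop, c ≤ f t → κ ≤ f' t) : ∀ᶠ t in atTop, f t ≤ c := by
  -- Run backwards from a late time, at which `f ≤ K`, the function decreases to `c`.
  obtain ⟨a, ha⟩ := eventually_atTop.1 (hf.and (hK.and h))
  filter_upwards [eventually_ge_atTop a] with t ht
  set δ := (max K c - c) / κ + 1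
  have hδ : max K c - c ≤ κ * δ := by
    rw [← div_le_iff₀' hκ]
    linarith
  have hδ0 : 0 < δ := by
    have : 0 ≤ max K c - c := sub_nonneg.2 (le_max_right K c)
    positivity
  have hmem : ∀ s ≤ -t, a ≤ -s := fun s hs => by linarith
  have hneg : ∀ s ≤ -t, HasDerivAt (fun u => f (-u)) (-f' (-s)) s := fun s hs => by
    simpa [Function.comp_def] using (ha _ (hmem s hs)).1.scomp s (hasDerivAt_neg s)
  rw [← neg_neg t]
  exact le_of_hasDerivAt_le_neg (f := fun s => f (-s)) (a := -t - δ) (K := max K c) (by linarith)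
    (fun s hs => (hneg s hs.2).continuousAt.continuousWithinAt) (fun s hs => hneg s hs.2.le)
    ((ha _ (hmem _ (by linarith))).2.1.trans (le_max_left _ _)) (le_max_right _ _)
    (by linarith) fun s hs hc => neg_le_neg ((ha _ (hmem s hs.2.le)).2.2 hc)

/-- The smaller root `l` of `l ^ 2 = α + l`, real when `-1/4 ≤ α`: the slope of a trapped solution
at a zero of `A` at which `A` has slope `α`. -/
noncomputable def zeroSlope (α : ℝ) : ℝ := (1 - √(1 + 4 * α)) / 2

lemma zeroSlope_zero : zeroSlope 0 = 0 := by simp [zeroSlope]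

lemma sub_zeroSlope_mul_le {α β r ε : ℝ} (hα : -(1 / 4) ≤ α) (hr : r ≤ 1 / 2) (hε : 0 ≤ ε)
    (hβ : |β - α| ≤ ε ^ 2 / 2) (hεr : ε ^ 2 ≤ (r - zeroSlope α) ^ 2) :
    (r - zeroSlope α) * (r ^ 2 - r - β) ≤ -(ε ^ 3 / 2) := by
  set D := r - zeroSlope α with hD
  have hsqrt : √(1 + 4 * α) ^ 2 = 1 + 4 * α := Real.sq_sqrt (by linarith)
  have hr_eq : r = D + (1 - √(1 + 4 * α)) / 2 := by rw [hD, zeroSlope]; ring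
  have hfactor : D * (r ^ 2 - r - β) = -D ^ 2 * (√(1 + 4 * α) - D) - D * (β - α) := by
    rw [hr_eq]
    linear_combination D / 4 * hsqrt
  have hgap : |D| ≤ √(1 + 4 * α) - D :=
    abs_le'.2 ⟨by linarith, by linarith [Real.sqrt_nonneg (1 + 4 * α)]⟩
  have hεD : ε ≤ |D| := abs_of_nonneg hε ▸ sq_le_sq.1 hεr
  calc D * (r ^ 2 - r - β)
      = -D ^ 2 * (√(1 + 4 * α) - D) - D * (β - α) := hfactor
    _ ≤ -D ^ 2 * |D| + |D| * (ε ^ 2 / 2) := by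
        have := (neg_le_abs (D * (β - α))).trans_eq (abs_mul _ _)
        nlinarith [mul_le_mul_of_nonneg_left hgap (sq_nonneg D),
          mul_le_mul_of_nonneg_left hβ (abs_nonneg D)]
    _ = -(|D| * (D ^ 2 - ε ^ 2 / 2)) := by ring
    _ ≤ -(ε * (ε ^ 2 - ε ^ 2 / 2)) := by gcongr; nlinarith
    _ = -(ε ^ 3 / 2) := by ring

lemma hasDerivAt_sub_const_sq {f : ℝ → ℝ} {β c t : ℝ} (hf : HasDerivAt f (f t - 1 - β / f t) t)
    (h0 : f t ≠ 0) :
    HasDerivAt (fun s => (f s - c) ^ 2) (2 * ((f t - c) * (f t ^ 2 - f t - β)) / f t) t := by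
  refine ((hf.sub_const c).fun_pow 2).congr_deriv ?_
  field_simp
  push_cast
  ring

section LogTime

variable {R B : ℝ → ℝ} {α : ℝ} (hB : Tendsto B atTop (𝓝 α))
  (hR : ∀ᶠ t in atTop, HasDerivAt R (R t - 1 - B t / R t) t)
  (hR0 : ∀ᶠ t in atTop, R t ≠ 0) (htrap : ∀ᶠ t in atTop, R t * (R t + 2 * B t) ≤ 0)
include hB hR hR0 htrap

lemma eventually_sub_zeroSlope_sq_le_of_neg (hB4 : ∀ᶠ t in atTop, -(1 / 4) ≤ B t) (hα : α < 0)
    {ε : ℝ} (hε : 0 < ε) : ∀ᶠ t in atTop, (R t - zeroSlope α) ^ 2 ≤ ε ^ 2 := by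
  have hα4 : -(1 / 4) ≤ α := ge_of_tendsto hB hB4
  refine eventually_le_of_hasDerivAt_le_neg (κ := 2 * ε ^ 3) (by positivity)
    (by filter_upwards [hR, hR0] with t ht ht0 using hasDerivAt_sub_const_sq ht ht0) ?_
  filter_upwards [hB.eventually_lt_const hα, hB4, hR0, htrap,
    hB.eventually (Metric.closedBall_mem_nhds α (ε := ε ^ 2 / 2) (by positivity))]
    with t hneg h4 h0 htr hBα hεt
  have hpos : 0 < R t := h0.symm.lt_of_le (by by_contra! h; nlinarith)
  have hhalf : R t ≤ 1 / 2 := by nlinarith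
  have hle := sub_zeroSlope_mul_le hα4 hhalf hε.le hBα hεt
  rw [div_le_iff₀ hpos]
  nlinarith [pow_pos hε 3]

lemma eventually_sub_zeroSlope_sq_le_of_pos (hα : 0 < α) {ε : ℝ} (hε : 0 < ε) :
    ∀ᶠ t in atTop, (R t - zeroSlope α) ^ 2 ≤ ε ^ 2 := by
  have hbounds : ∀ᶠ t in atTop, R t < 0 ∧ -R t ≤ 4 * α := by
    filter_upwards [hB.eventually_const_lt hα, hB.eventually_lt_const (show α < 2 * α by linarith),
      hR0, htrap] with t hpos hB2 h0 htr
    have hneg : R t < 0 := h0.lt_of_le (by by_contra! h; nlinarith)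
    exact ⟨hneg, by nlinarith⟩
  refine eventually_le_of_le_hasDerivAt (κ := ε ^ 3 / (4 * α))
    (K := (4 * α + |zeroSlope α|) ^ 2) (by positivity)
    (by filter_upwards [hR, hR0] with t ht ht0 using hasDerivAt_sub_const_sq ht ht0) ?_ ?_
  · filter_upwards [hbounds] with t ⟨hneg, hle⟩
    refine sq_le_sq.2 ((abs_sub _ _).trans ?_)
    rw [abs_of_neg hneg, abs_of_nonneg (a := _ + _) (by positivity)]
    linarith
  · filter_upwards [hbounds,
      hB.eventually (Metric.closedBall_mem_nhds α (ε := ε ^ 2 / 2) (by positivity))]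
      with t ⟨hneg, hR4⟩ hBα hεt
    have hle := sub_zeroSlope_mul_le (by linarith) (by linarith) hε.le hBα hεt
    rw [← neg_div_neg_eq (2 * _)]
    have := pow_pos hε 3
    exact div_le_div₀ (by linarith) (by linarith) (by linarith) hR4

lemma tendsto_zeroSlope (hB4 : ∀ᶠ t in atTop, -(1 / 4) ≤ B t) (hα : α ≠ 0) :
    Tendsto R atTop (𝓝 (zeroSlope α)) := by
  refine Metric.tendsto_nhds.2 fun ε hε => ?_
  have hsq : ∀ᶠ t in atTop, (R t - zeroSlope α) ^ 2 ≤ (ε / 2) ^ 2 :=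
    hα.lt_or_gt.elim
      (fun h => eventually_sub_zeroSlope_sq_le_of_neg hB hR hR0 htrap hB4 h (half_pos hε))
      (fun h => eventually_sub_zeroSlope_sq_le_of_pos hB hR hR0 htrap h (half_pos hε))
  filter_upwards [hsq] with t ht
  exact (abs_le_of_sq_le_sq ht (half_pos hε).le).trans_lt (half_lt_self hε)

end LogTime

/-- The slope of `f` from `e` to `e + exp (-s)` when `f e = 0`: in the logarithmic time `s`, the
behaviour of `f` at the zero `e` becomes the behaviour of `logSlope f e` at infinity. -/
noncomputable def logSlope (f : ℝ → ℝ) (e s : ℝ) : ℝ := Real.exp s * f (e + Real.exp (-s))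

lemma map_add_exp_neg_atTop (e : ℝ) : map (fun s => e + Real.exp (-s)) atTop = 𝓝[>] e := by
  have hcomp : (fun s => e + Real.exp (-s)) = Homeomorph.addLeft e ∘ Real.exp ∘ Neg.neg := rfl
  rw [hcomp, ← Filter.map_map, ← Filter.map_map, map_neg_atTop, Real.map_exp_atBot,
    (Homeomorph.addLeft e).isEmbedding.map_nhdsWithin_eq]
  simp

lemma tendsto_logSlope_iff {f : ℝ → ℝ} {e l : ℝ} (he : f e = 0) :
    Tendsto (logSlope f e) atTop (𝓝 l) ↔ HasDerivWithinAt f l (Ici e) e := by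
  have hslope : logSlope f e = slope f e ∘ fun s => e + Real.exp (-s) := by
    ext s
    simp [logSlope, slope_def_field, he, Real.exp_neg, mul_comm]
  rw [← hasDerivWithinAt_Ioi_iff_Ici, hasDerivWithinAt_iff_tendsto_slope' self_notMem_Ioi,
    ← map_add_exp_neg_atTop, tendsto_map'_iff, hslope]

lemma hasDerivAt_logSlope {f : ℝ → ℝ} {f' e s : ℝ} (hf : HasDerivAt f f' (e + Real.exp (-s))) :
    HasDerivAt (logSlope f e) (logSlope f e s - f') s := by
  have harg : HasDerivAt (fun s => e + Real.exp (-s)) (-Real.exp (-s)) s := by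
    simpa using (hasDerivAt_neg s).exp.const_add e
  refine ((Real.hasDerivAt_exp s).mul (hf.comp s harg)).congr_deriv ?_
  have hexp : Real.exp s * Real.exp (-s) = 1 := by
    rw [← Real.exp_add, add_neg_cancel, Real.exp_zero]
  simp only [logSlope, Function.comp_apply]
  linear_combination -f' * hexp

lemma SolvesAt.hasDerivAt_logSlope {A x : ℝ → ℝ} {e s : ℝ}
    (h : SolvesAt A x (e + Real.exp (-s))) (h0 : x (e + Real.exp (-s)) ≠ 0) :
    HasDerivAt (logSlope x e)
      (logSlope x e s - 1 - logSlope A e s / logSlope x e s) s := by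
  refine (AbelNF.hasDerivAt_logSlope h.1.hasDerivAt).congr_deriv ?_
  rw [sub_sub, logSlope, logSlope, mul_div_mul_left _ _ (Real.exp_ne_zero s),
    one_add_div h0, eq_div_of_mul_eq h0 ((mul_comm _ _).trans (h.2.trans (add_comm _ _)))]

lemma IsTrappedAt.logSlope {A x : ℝ → ℝ} {e s : ℝ} (h : IsTrappedAt A x (e + Real.exp (-s))) :
    logSlope x e s * (logSlope x e s + 2 * logSlope A e s) ≤ 0 := by
  calc _ = Real.exp s ^ 2 *
        (x (e + Real.exp (-s)) * (x (e + Real.exp (-s)) + 2 * A (e + Real.exp (-s)))) := by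
        unfold AbelNF.logSlope
        ring
    _ ≤ 0 := mul_nonpos_of_nonneg_of_nonpos (sq_nonneg _) h

lemma SolvesAt.ne_zero {A x : ℝ → ℝ} {t : ℝ} (h : SolvesAt A x t) (hA : A t ≠ 0) : x t ≠ 0 :=
  fun h0 => hA (by simpa [h0] using h.2.symm)

lemma hasDerivAt_zero_of_isTrappedAt {A x : ℝ → ℝ} {e : ℝ} (htrap : ∀ t, IsTrappedAt A x t)
    (he : A e = 0) (hA : HasDerivAt A 0 e) : HasDerivAt x 0 e := by
  rw [hasDerivAt_iff_isLittleO, he] at hA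
  rw [hasDerivAt_iff_isLittleO, (htrap e).eq_zero he]
  refine Asymptotics.IsBigO.trans_isLittleO (.of_bound 2 (.of_forall fun t => ?_)) hA
  simpa using (htrap t).abs_le

section ZeroSlope

variable {A x : ℝ → ℝ} {e : ℝ} (hA : Differentiable ℝ A) (hA' : ∀ t, -(1 / 4) ≤ deriv A t)
  (htrap : ∀ t, IsTrappedAt A x t) (hsol : ∀ t, A t ≠ 0 → SolvesAt A x t) (he : A e = 0)
include hA hA' htrap hsol he

lemma hasDerivWithinAt_Ici_zeroSlope (hslope : deriv A e ≠ 0) :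
    HasDerivWithinAt x (zeroSlope (deriv A e)) (Ici e) e := by
  have hderiv : HasDerivAt A (deriv A e) e := (hA e).hasDerivAt
  have hne : ∀ᶠ s in atTop, A (e + Real.exp (-s)) ≠ 0 := by
    rw [← eventually_map (P := (A · ≠ 0)) (m := fun s => e + Real.exp (-s)),
      map_add_exp_neg_atTop]
    exact (hderiv.eventually_ne hslope).filter_mono (nhdsGT_le_nhdsNE e)
  have hx : ∀ᶠ s in atTop, x (e + Real.exp (-s)) ≠ 0 :=
    hne.mono fun s hs => (hsol _ hs).ne_zero hs
  refine (tendsto_logSlope_iff ((htrap e).eq_zero he)).1 (tendsto_zeroSlope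
    (B := logSlope A e) ((tendsto_logSlope_iff he).2 hderiv.hasDerivWithinAt) ?_ ?_
    (.of_forall fun s => (htrap _).logSlope) (.of_forall fun s => ?_) hslope)
  · filter_upwards [hne, hx] with s hs hxs using (hsol _ hs).hasDerivAt_logSlope hxs
  · exact hx.mono fun s hs => mul_ne_zero (Real.exp_ne_zero s) hs
  · have hmvt := mul_sub_le_image_sub_of_le_deriv hA hA'
      (le_add_of_nonneg_right (a := e) (Real.exp_pos (-s)).le)
    rw [he, sub_zero, add_sub_cancel_left, Real.exp_neg, ← div_eq_mul_inv,
      div_le_iff₀' (Real.exp_pos s), ← Real.exp_neg] at hmvt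
    exact hmvt

lemma hasDerivAt_zeroSlope : HasDerivAt x (zeroSlope (deriv A e)) e := by
  rcases eq_or_ne (deriv A e) 0 with hzero | hslope
  · rw [hzero, zeroSlope_zero]
    exact hasDerivAt_zero_of_isTrappedAt htrap he (hzero ▸ (hA e).hasDerivAt)
  have hright := hasDerivWithinAt_Ici_zeroSlope hA hA' htrap hsol he hslope
  have hleft : HasDerivWithinAt x (zeroSlope (deriv A e)) (Iic e) e := by
    have hreflect := hasDerivWithinAt_Ici_zeroSlope (e := -e) (differentiable_reflect hA)
      (fun t => by rw [deriv_reflect]; exact hA' (-t)) (fun t => (htrap (-t)).reflect)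
      (fun t ht => (hsol (-t) (by simpa [reflect] using ht)).reflect) (by simp [reflect, he])
      (by rwa [deriv_reflect, neg_neg])
    rw [deriv_reflect, neg_neg] at hreflect
    simpa using hasDerivWithinAt_reflect hreflect
  simpa [Iic_union_Ici] using hleft.union hright

end ZeroSlope

lemma solvesAt_of_isTrappedAt {A x : ℝ → ℝ} (hA : Differentiable ℝ A)
    (hA' : ∀ t, -(1 / 4) ≤ deriv A t) (htrap : ∀ t, IsTrappedAt A x t)
    (hsol : ∀ t, A t ≠ 0 → SolvesAt A x t) (t : ℝ) : SolvesAt A x t := by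
  rcases eq_or_ne (A t) 0 with hzero | hne
  · refine ⟨(hasDerivAt_zeroSlope hA hA' htrap hsol hzero).differentiableAt, ?_⟩
    rw [(htrap t).eq_zero hzero, hzero, zero_mul, add_zero]
  · exact hsol t hne

lemma SolvesAt.hasDerivAt_sq {A x : ℝ → ℝ} {t : ℝ} (h : SolvesAt A x t) :
    HasDerivAt (fun s => x s ^ 2) (2 * (A t + x t)) t :=
  (h.1.hasDerivAt.fun_pow 2).congr_deriv (by rw [← h.2]; push_cast; ring)

lemma isTrappedAt_of_neg {A x : ℝ → ℝ} (hA : Differentiable ℝ A)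
    (hA' : ∀ t, -(1 / 4) ≤ deriv A t) (hx : ∀ t, SolvesAt A x t) {a t : ℝ} (hat : a ≤ t)
    (ha : x a = 0) (ht : x t < 0) : IsTrappedAt A x t := by
  have hxd : Differentiable ℝ x := fun s => (hx s).1
  have hxc : Continuous x := hxd.continuous
  obtain ⟨c, hct, hc, hneg⟩ := exists_zero_forall_Ioc_pos (f := fun s => -x s)
    hxc.neg.continuousOn hat (by simp [ha]) (neg_pos.2 ht)
  have hxc0 : x c = 0 := neg_eq_zero.1 hc
  have hAc : A c = 0 := by simpa [hxc0] using (hx c).2.symm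
  have hd := nonpos_of_hasDerivAt_nonpos_of_pos (d := fun s => -x s - 2 * A s)
    (by have := hA.continuous; fun_prop)
    (fun s _ => (hxd s).hasDerivAt.fun_neg.fun_sub ((hA s).hasDerivAt.const_mul 2))
    (by simp [hxc0, hAc]) (fun s hs hpos => ?_) (right_mem_Icc.2 hct.2.le)
  · exact isTrappedAt_of_nonpos ht.le (sub_nonpos.1 hd)
  · have hxs : x s < 0 := neg_pos.1 (hneg s (Ioo_subset_Ioc_self hs))
    have hhalf : 1 / 2 < deriv x s := by
      refine lt_of_mul_lt_mul_of_nonpos_left ?_ hxs.le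
      linarith [(hx s).2]
    linarith [hA' s]

lemma isTrappedAt_of_zeros {A x : ℝ → ℝ} (hA : Differentiable ℝ A)
    (hA' : ∀ t, -(1 / 4) ≤ deriv A t) (hx : ∀ t, SolvesAt A x t) {a b t : ℝ} (ht : t ∈ Icc a b)
    (ha : x a = 0) (hb : x b = 0) : IsTrappedAt A x t := by
  rcases lt_trichotomy (x t) 0 with hneg | hzero | hpos
  · exact isTrappedAt_of_neg hA hA' hx ht.1 ha hneg
  · simp [IsTrappedAt, hzero]
  · have hreflect := isTrappedAt_of_neg (x := reflect x) (t := -t) (differentiable_reflect hA)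
      (fun s => by rw [deriv_reflect]; exact hA' (-s)) (fun s => (hx (-s)).reflect)
      (neg_le_neg ht.2) (by simp [reflect, hb]) (by simpa [reflect] using hpos)
    simpa using IsTrappedAt.reflect hreflect

lemma le_of_isTrappedAt_of_pos {A x y : ℝ → ℝ} (hA : Continuous A) (hx : ∀ t, SolvesAt A x t)
    (hy : ∀ t, SolvesAt A y t) (htx : ∀ t, IsTrappedAt A x t) (hty : ∀ t, IsTrappedAt A y t)
    {a t : ℝ} (hat : a ≤ t) (ha : A a = 0) (ht : 0 < A t) : y t ≤ x t := by
  obtain ⟨c, hct, hc, hpos⟩ := exists_zero_forall_Ioc_pos hA.continuousOn hat ha.le ht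
  have hderiv : ∀ s,
      HasDerivAt (fun s => x s ^ 2 - y s ^ 2) (2 * (A s + x s) - 2 * (A s + y s)) s := fun s =>
    (hx s).hasDerivAt_sq.fun_sub (hy s).hasDerivAt_sq
  have hd := nonpos_of_hasDerivAt_nonpos_of_pos (d := fun s => x s ^ 2 - y s ^ 2)
    (fun s _ => (hderiv s).continuousAt.continuousWithinAt) (fun s _ => hderiv s)
    (by simp [(htx c).eq_zero hc, (hty c).eq_zero hc]) (fun s hs hd => ?_)
    (right_mem_Icc.2 hct.2.le)
  · nlinarith [(htx t).nonpos ht, (hty t).nonpos ht]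
  · have hAs := hpos s (Ioo_subset_Ioc_self hs)
    nlinarith [(htx s).nonpos hAs, (hty s).nonpos hAs]

lemma eq_of_isTrappedAt {A x y : ℝ → ℝ} (hA : Continuous A) (hx : ∀ t, SolvesAt A x t)
    (hy : ∀ t, SolvesAt A y t) (htx : ∀ t, IsTrappedAt A x t) (hty : ∀ t, IsTrappedAt A y t)
    {a b t : ℝ} (ht : t ∈ Icc a b) (ha : A a = 0) (hb : A b = 0) : x t = y t := by
  rcases lt_trichotomy (A t) 0 with hneg | hzero | hpos
  · have hle : ∀ {x y : ℝ → ℝ}, (∀ t, SolvesAt A x t) → (∀ t, SolvesAt A y t) →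
        (∀ t, IsTrappedAt A x t) → (∀ t, IsTrappedAt A y t) → x t ≤ y t :=
      fun {x y} hx hy htx hty => by
        have h := le_of_isTrappedAt_of_pos (x := reflect x) (y := reflect y)
          (hA.comp continuous_neg).neg (fun s => (hx (-s)).reflect) (fun s => (hy (-s)).reflect)
          (fun s => (htx (-s)).reflect) (fun s => (hty (-s)).reflect) (neg_le_neg ht.2)
          (by simp [hb]) (by simpa using hneg)
        simpa [reflect] using h
    exact le_antisymm (hle hx hy htx hty) (hle hy hx hty htx)
  · rw [(htx t).eq_zero hzero, (hty t).eq_zero hzero]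
  · exact le_antisymm (le_of_isTrappedAt_of_pos hA hy hx hty htx ht.1 ha hpos)
      (le_of_isTrappedAt_of_pos hA hx hy htx hty ht.1 ha hpos)

lemma exists_zeros_mem_Icc_of_periodic {f : ℝ → ℝ} {T : ℝ} (hT : 0 < T)
    (hf : Function.Periodic f T) (h₀ : ∃ t₀, f t₀ = 0) (t : ℝ) :
    ∃ a b, t ∈ Icc a b ∧ f a = 0 ∧ f b = 0 := by
  obtain ⟨t₀, h₀⟩ := h₀
  obtain ⟨a, ha, hfa⟩ := hf.exists_mem_Ico hT t₀ (t - T)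
  obtain ⟨b, hb, hfb⟩ := hf.exists_mem_Ico hT t₀ t
  exact ⟨a, b, ⟨by linarith [ha.2], hb.1⟩, hfa ▸ h₀, hfb ▸ h₀⟩

lemma sInf_image_Icc_le_of_periodic {f : ℝ → ℝ} {T : ℝ} (hT : 0 < T) (hf : Continuous f)
    (hper : Function.Periodic f T) (t : ℝ) : sInf (f '' Icc 0 T) ≤ f t := by
  refine csInf_le (isCompact_Icc.image hf).bddBelow ?_
  have himage : f '' Icc 0 (0 + T) = range f := hper.image_Icc hT 0
  rw [zero_add] at himage
  exact himage ▸ mem_range_self t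

end AbelNF

open AbelNF in
theorem normal_form_unique_nonconstant_sign_solution_general {A : ℝ → ℝ} {T : ℝ} (hT : 0 < T)
    (hA : Differentiable ℝ A) (hAper : Function.Periodic A T) (hzero : ∃ t, A t = 0)
    (hne : ∃ t, A t ≠ 0) (hA' : ∀ t, -(1 / 4) ≤ deriv A t) :
    ∃! x : ℝ → ℝ, Differentiable ℝ x ∧ Function.Periodic x T ∧
      (∀ t : ℝ, x t * deriv x t = A t + x t) ∧
      (∃ t₀ : ℝ, x t₀ = 0) ∧ (∃ t : ℝ, x t ≠ 0) := by
  obtain ⟨x, hper, hx⟩ := exists_periodic_trapped_solution hT hA hAper hzero hA'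
  have htrap : ∀ t, IsTrappedAt A x t := fun t => (hx t).1
  have hsol : ∀ t, SolvesAt A x t := solvesAt_of_isTrappedAt hA hA' htrap fun t => (hx t).2
  refine ⟨x, ⟨fun t => (hsol t).1, hper, fun t => (hsol t).2,
    hzero.imp fun t ht => (htrap t).eq_zero ht, hne.imp fun t ht => (hsol t).ne_zero ht⟩, ?_⟩
  rintro y ⟨hyd, hyper, hy, hyzero, -⟩
  have hysol : ∀ t, SolvesAt A y t := fun t => ⟨hyd t, hy t⟩
  have hytrap : ∀ t, IsTrappedAt A y t := fun t => by
    obtain ⟨a, b, ht, ha, hb⟩ := exists_zeros_mem_Icc_of_periodic hT hyper hyzero t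
    exact isTrappedAt_of_zeros hA hA' hysol ht ha hb
  funext t
  obtain ⟨a, b, ht, ha, hb⟩ := exists_zeros_mem_Icc_of_periodic hT hAper hzero t
  exact eq_of_isTrappedAt hA.continuous hysol hsol hytrap htrap ht ha hb

/-- if A is C¹, T-periodic, has a zero in [0,T], min A′ > −1/4 and all zeros
of A are simple, then (NF): x·x′ = A(t) + x has exactly one T-periodic solution with
nonconstant sign. -/
theorem normal_form_unique_nonconstant_sign_solution
    (T : ℝ) (hT : 0 < T) (A : ℝ → ℝ) (hA : ContDiff ℝ 1 A)
    (hAper : Function.Periodic A T)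
    (hzero : ∃ t ∈ Icc (0 : ℝ) T, A t = 0)
    (hmin : sInf ((fun t => deriv A t) '' Icc (0 : ℝ) T) > -(1 / 4))
    (hsimple : ∀ t : ℝ, A t = 0 → deriv A t ≠ 0) :
    ∃! x : ℝ → ℝ, Differentiable ℝ x ∧ Function.Periodic x T ∧
      (∀ t : ℝ, x t * deriv x t = A t + x t) ∧
      (∃ t₀ : ℝ, x t₀ = 0) ∧ (∃ t : ℝ, x t ≠ 0) := by
  obtain ⟨e, -, he⟩ := hzero
  refine normal_form_unique_nonconstant_sign_solution_general hT (hA.differentiable one_ne_zero)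
    hAper ⟨e, he⟩ ?_ fun t => ?_
  · by_contra! h
    exact hsimple e he (by simp [show A = fun _ => 0 from funext h])
  · exact hmin.le.trans (AbelNF.sInf_image_Icc_le_of_periodic hT (hA.continuous_deriv le_rfl)
      (fun s => by rw [← deriv_comp_add_const, hAper.funext]) t)
end

section
/- Let T > 0 and let A: ℝ → ℝ be C¹ and T-periodic, with at least one zero in [0,T], with min_{t∈[0,T]} A′(t) > −1/4, with all zeros of A simple (A′(t) ≠ 0 whenever A(t) = 0), and with ∫₀ᵀ A(t) dt = 0. Then the normal form equation (NF) has exactly one T-periodic solution. -/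
open Set Filter Topology

/-!
A solution `x` of `x x' = A + x` satisfies `(x²)' = 2 A + 2 x`. If `x` and `A` have opposite signs,
the square `z = (x⁻)²` of the negative part therefore solves `z' = 2 A⁺ - 2 √z`, and the square of
the positive part does so for the reflected forcing term `t ↦ -A (-t)`. The right-hand side is
decreasing in `z`, so solutions obey a comparison principle forward in time, which makes up for the
missing Lipschitz condition at `z = 0`.

When `A' ≥ -1/4`, the parabola `((n - t) / 2)²` is a supersolution to the left of any `n` with
`A n ≤ 0`. It forces `z` to vanish wherever `A ≤ 0`, so the solution started from `0` there is
periodic, and the difference of the two square roots solves the equation wherever `A ≠ 0`. At a zero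
of `A` of slope `α`, barriers give `√z` the right slope `κ` with `κ² + κ = α⁺` and the left slope
`-l` with `l - l² = α⁻`, `l ≤ 1/2`; the two halves therefore join to a differentiable function.

Conversely `∫ A = 0` gives every periodic solution a zero, by Rolle's theorem for `x² / 2 - ∫ A`.
Comparison started at that zero bounds `x⁻` and `x⁺` by the square roots just found, so `x` and `A`
have opposite signs, and then the squares of both parts are determined by their equations.
-/

/-! ### Comparison -/

lemma hasDerivAt_posPart_sq (t : ℝ) : HasDerivAt (fun t : ℝ => (t⁺) ^ 2) (2 * t⁺) t := by
  rcases lt_trichotomy t 0 with ht | rfl | ht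
  · refine ((hasDerivAt_const t (0 : ℝ)).congr_deriv ?_).congr_of_eventuallyEq ?_
    · simp [posPart_eq_zero.2 ht.le]
    · filter_upwards [Iio_mem_nhds ht] with s hs
      simp [posPart_eq_zero.2 (mem_Iio.1 hs).le]
  · refine hasDerivAt_iff_isLittleO.2 (Asymptotics.IsBigO.trans_isLittleO (g := fun s : ℝ => s ^ 2)
      (.of_bound 1 (.of_forall fun s => ?_)) ?_)
    · suffices (s⁺) ^ 2 ≤ s ^ 2 by simpa [abs_of_nonneg (posPart_nonneg s)]
      rw [← sq_abs s]
      exact pow_le_pow_left₀ (posPart_nonneg s) (sup_le (le_abs_self s) (abs_nonneg s)) 2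
    · simpa using Asymptotics.isLittleO_pow_id (𝕜 := ℝ) one_lt_two
  · refine ((hasDerivAt_pow 2 t).congr_deriv ?_).congr_of_eventuallyEq ?_
    · simp [posPart_eq_self.2 ht.le]
    · filter_upwards [Ioi_mem_nhds ht] with s hs
      rw [posPart_eq_self.2 (mem_Ioi.1 hs).le]

lemma nonpos_of_hasDerivAt_nonpos {w w' : ℝ → ℝ} {a b : ℝ} (hc : ContinuousOn w (Icc a b))
    (hd : ∀ s ∈ Ioo a b, HasDerivAt w (w' s) s) (ha : w a ≤ 0)
    (h : ∀ s ∈ Ioo a b, 0 < w s → w' s ≤ 0) : ∀ s ∈ Icc a b, w s ≤ 0 := by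
  intro s hs
  have hanti : AntitoneOn (fun s => ((w s)⁺) ^ 2) (Icc a b) := by
    refine antitoneOn_of_hasDerivWithinAt_nonpos (f' := fun s => 2 * (w s)⁺ * w' s)
      (convex_Icc a b) ((continuous_posPart.comp_continuousOn hc).pow 2) (fun u hu => ?_)
      fun u hu => ?_ <;> rw [interior_Icc] at hu
    · exact ((hasDerivAt_posPart_sq (w u)).comp u (hd u hu)).hasDerivWithinAt
    · rcases (posPart_nonneg (w u)).eq_or_lt with h0 | h0
      · simp [← h0]
      · exact mul_nonpos_of_nonneg_of_nonpos (by linarith) (h u hu (posPart_pos_iff.1 h0))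
  have h0 : ((w s)⁺) ^ 2 ≤ 0 := by
    simpa [posPart_eq_zero.2 ha] using hanti ⟨le_rfl, hs.1.trans hs.2⟩ hs hs.1
  exact posPart_eq_zero.1 (pow_eq_zero_iff two_ne_zero |>.1 (h0.antisymm (sq_nonneg _)))

lemma le_of_deriv_le_of_le_deriv {F : ℝ → ℝ → ℝ} {u u' v v' : ℝ → ℝ} {a b : ℝ}
    (hF : ∀ s ∈ Ioo a b, Antitone (F s))
    (huc : ContinuousOn u (Icc a b)) (hvc : ContinuousOn v (Icc a b))
    (hu : ∀ s ∈ Ioo a b, HasDerivAt u (u' s) s) (hv : ∀ s ∈ Ioo a b, HasDerivAt v (v' s) s)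
    (hu' : ∀ s ∈ Ioo a b, u' s ≤ F s (u s)) (hv' : ∀ s ∈ Ioo a b, F s (v s) ≤ v' s)
    (ha : u a ≤ v a) : ∀ s ∈ Icc a b, u s ≤ v s := fun s hs =>
  sub_nonpos.1 <| nonpos_of_hasDerivAt_nonpos (huc.sub hvc) (fun s hs => (hu s hs).sub (hv s hs))
    (sub_nonpos.2 ha) (fun s hs hlt => sub_nonpos.2 <| (hu' s hs).trans <|
      (hF s hs (sub_pos.1 hlt).le).trans (hv' s hs)) s hs

/-! ### The equation `z' = g - 2√z` -/

lemma le_sqrt_sq (d : ℝ) : d ≤ √d ^ 2 := (Real.sqrt_le_left (Real.sqrt_nonneg d)).1 le_rfl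

lemma antitone_sub_sqrt (c : ℝ) : Antitone fun z => c - 2 * √z := fun x y hxy => by
  have := Real.sqrt_le_sqrt hxy
  linarith

lemma abs_sqrt_sub_sqrt_le (a b : ℝ) : |√a - √b| ≤ √|a - b| := by
  have key (c d : ℝ) : √c ≤ √d + √|c - d| := by
    refine (Real.sqrt_le_left (by positivity)).2 ?_
    nlinarith [le_sqrt_sq d, le_sqrt_sq |c - d|, le_abs_self (c - d),
      mul_nonneg (Real.sqrt_nonneg d) (Real.sqrt_nonneg |c - d|)]
  have hab := key a b
  have hba := key b a
  rw [abs_sub_comm b a] at hba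
  exact abs_sub_le_iff.2 ⟨by linarith, by linarith⟩

lemma lipschitzWith_max_sqrt {η : NNReal} (hη : 0 < η) :
    LipschitzWith η⁻¹ fun z => max (√z) η := by
  refine LipschitzWith.of_le_add_mul _ fun x y => ?_
  set M : ℝ := max (√y) η
  have hηM : (η : ℝ) ≤ M := le_max_right _ _
  have hM : 0 ≤ M := η.2.trans hηM
  rw [NNReal.coe_inv]
  set d : ℝ := (η : ℝ)⁻¹ * dist x y
  have hd : 0 ≤ d := by positivity
  have hy : y ≤ M ^ 2 := (Real.sqrt_le_left hM).1 (le_max_left _ _)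
  have hxy : x - y ≤ M * d := calc
    x - y ≤ dist x y := le_abs_self _
    _ = η * d := (mul_inv_cancel_left₀ (NNReal.coe_pos.2 hη).ne' _).symm
    _ ≤ M * d := by gcongr
  exact max_le (Real.sqrt_le_iff.2 ⟨by positivity, by nlinarith⟩) (by linarith)

lemma isPicardLindelof_max_sqrt {g : ℝ → ℝ} {a b : ℝ} (hab : a ≤ b) (hg : ContinuousOn g (Icc a b))
    {η : NNReal} (hη : 0 < η) :
    ∃ r M K, IsPicardLindelof (fun s z => g s - 2 * max (√z) η)
      (⟨a, left_mem_Icc.2 hab⟩ : Icc a b) 0 r 0 M K := by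
  obtain ⟨G, hG⟩ := isCompact_Icc.exists_bound_of_continuousOn hg
  lift G to NNReal using (norm_nonneg _).trans (hG a (left_mem_Icc.2 hab))
  obtain ⟨l, hl⟩ : ∃ l : NNReal, (l : ℝ) = b - a := ⟨⟨b - a, sub_nonneg.2 hab⟩, rfl⟩
  obtain ⟨R, hR⟩ : ∃ R : NNReal, R = (G + 2 * η + 2) * l + 1 := ⟨_, rfl⟩
  refine ⟨R ^ 2, G + 2 * (R + η), 0 + ‖(2 : ℝ)‖₊ * η⁻¹, fun t _ => ?_, fun x _ => ?_,
    fun t ht x hx => ?_, ?_⟩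
  · exact ((LipschitzWith.const (g t)).sub
      ((lipschitzWith_smul (2 : ℝ)).comp (lipschitzWith_max_sqrt hη))).lipschitzOnWith
  · exact hg.sub continuousOn_const
  · have hx : x ≤ R ^ 2 := (le_abs_self x).trans (by simpa using hx)
    have hle : max √x η ≤ R + η := max_le (((Real.sqrt_le_left R.2).2 hx).trans (by simp)) (by simp)
    have hpos : 0 ≤ max √x η := le_max_of_le_left (Real.sqrt_nonneg x)
    have hgt := abs_le.1 (hG t ht)
    push_cast
    exact abs_le.2 ⟨by linarith, by linarith⟩
  · rw [sub_self, max_eq_left (sub_nonneg.2 hab), ← hl]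
    norm_cast
    rw [tsub_zero]
    calc (G + 2 * (R + η)) * l = ((G + 2 * η) * 1 + 2 * R) * l := by ring
      _ ≤ ((G + 2 * η) * R + 2 * R) * l := by gcongr; simp [hR]
      _ = (G + 2 * η + 2) * l * R := by ring
      _ ≤ R * R := by gcongr; simp [hR]
      _ = R ^ 2 := (sq R).symm

lemma exists_regularized_solution {g : ℝ → ℝ} {a b : ℝ} (hab : a ≤ b)
    (hg : ContinuousOn g (Icc a b)) {η : NNReal} (hη : 0 < η) :
    ∃ z : ℝ → ℝ, z a = 0 ∧ ContinuousOn z (Icc a b) ∧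
      ∀ s ∈ Ioo a b, HasDerivAt z (g s - 2 * max (√(z s)) η) s := by
  obtain ⟨r, M, K, h⟩ := isPicardLindelof_max_sqrt hab hg hη
  obtain ⟨z, hza, hz⟩ := h.exists_eq_forall_mem_Icc_hasDerivWithinAt₀
  exact ⟨z, hza, fun s hs => (hz s hs).continuousWithinAt, fun s hs =>
    (hz s (Ioo_subset_Icc_self hs)).hasDerivAt (Icc_mem_nhds hs.1 hs.2)⟩

lemma regularized_sub_le {g : ℝ → ℝ} {a b : ℝ} {η δ : NNReal} {z y : ℝ → ℝ} (hya : y a = z a)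
    (hzc : ContinuousOn z (Icc a b)) (hyc : ContinuousOn y (Icc a b))
    (hz : ∀ s ∈ Ioo a b, HasDerivAt z (g s - 2 * max (√(z s)) η) s)
    (hy : ∀ s ∈ Ioo a b, HasDerivAt y (g s - 2 * max (√(y s)) δ) s) :
    ∀ s ∈ Icc a b, z s - y s ≤ 2 * δ * (b - a) := by
  intro s hs
  have key := le_of_deriv_le_of_le_deriv (F := fun s z => g s - 2 * √z)
    (v := fun s => y s + 2 * δ * (s - a)) (fun s _ => antitone_sub_sqrt (g s)) hzc (by fun_prop) hz
    (fun s hs => (hy s hs).add (((hasDerivAt_id s).sub_const a).const_mul _))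
    (fun s _ => by linarith [le_max_left √(z s) η]) (fun s hs => ?_) (by simp [hya]) s hs
  · have : 2 * δ * (s - a) ≤ 2 * δ * (b - a) := by gcongr; exact hs.2
    linarith
  · have hmono : √(y s) ≤ √(y s + 2 * δ * (s - a)) :=
      Real.sqrt_le_sqrt (le_add_of_nonneg_right (mul_nonneg (by positivity) (by linarith [hs.1])))
    have : max √(y s) δ ≤ √(y s) + δ := max_le_add_of_nonneg (Real.sqrt_nonneg _) δ.2
    linarith

lemma hasDerivAt_of_tendstoUniformlyOn_regularized {g Z : ℝ → ℝ} {a b : ℝ} {z : ℕ → ℝ → ℝ}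
    {η : ℕ → NNReal} (hη : Tendsto η atTop (𝓝 0)) (hZ : TendstoUniformlyOn z Z atTop (Icc a b))
    (hz : ∀ n, ∀ s ∈ Ioo a b, HasDerivAt (z n) (g s - 2 * max (√(z n s)) (η n)) s) :
    ∀ s ∈ Ioo a b, HasDerivAt Z (g s - 2 * √(Z s)) s := by
  intro s hs
  refine hasDerivAt_of_tendstoUniformlyOn (g' := fun s => g s - 2 * √(Z s)) isOpen_Ioo ?_
    (.of_forall hz) (fun s hs => hZ.tendsto_at (Ioo_subset_Icc_self hs)) hs
  rw [Metric.tendstoUniformlyOn_iff] at hZ ⊢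
  intro ε hε
  have hη' := (NNReal.tendsto_coe.2 hη).eventually_lt_const (show ((0 : NNReal) : ℝ) < ε / 4 by
    simpa using hε)
  filter_upwards [hη', hZ ((ε / 4) ^ 2) (by positivity)] with n hn hZn s hs
  have hsqrt : |√(Z s) - √(z n s)| < ε / 4 := (abs_sqrt_sub_sqrt_le _ _).trans_lt <|
    (Real.sqrt_lt' (by positivity)).2 (hZn s (Ioo_subset_Icc_self hs))
  have hle : √(z n s) ≤ max √(z n s) (η n) := le_max_left _ _
  have hge : max √(z n s) (η n) ≤ √(z n s) + η n :=
    max_le_add_of_nonneg (Real.sqrt_nonneg _) (η n).2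
  have := abs_lt.1 hsqrt
  exact abs_lt.2 ⟨by linarith, by linarith⟩

lemma exists_hasDerivAt_sub_sqrt {g : ℝ → ℝ} {a b : ℝ} (hab : a ≤ b)
    (hg : ContinuousOn g (Icc a b)) :
    ∃ z : ℝ → ℝ, z a = 0 ∧ ContinuousOn z (Icc a b) ∧
      ∀ s ∈ Ioo a b, HasDerivAt z (g s - 2 * √(z s)) s := by
  obtain ⟨η, hη_anti, hη_pos, hη⟩ := exists_seq_strictAnti_tendsto (0 : NNReal)
  choose z hza hzc hz using fun n => exists_regularized_solution hab hg (hη_pos n)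
  have hbound : ∀ N m n, N ≤ m → N ≤ n → ∀ s ∈ Icc a b,
      |z m s - z n s| ≤ 2 * η N * (b - a) := by
    have key : ∀ N m n, N ≤ n → ∀ s ∈ Icc a b, z m s - z n s ≤ 2 * η N * (b - a) := by
      intro N m n hn s hs
      refine (regularized_sub_le (by rw [hza, hza]) (hzc m) (hzc n) (hz m) (hz n) s hs).trans ?_
      have := hη_anti.antitone hn
      have := sub_nonneg.2 hab
      gcongr
    exact fun N m n hm hn s hs => abs_sub_le_iff.2 ⟨key N m n hn s hs, key N n m hm s hs⟩
  have hlim : Tendsto (fun N => 2 * (η N : ℝ) * (b - a)) atTop (𝓝 0) := by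
    simpa using ((NNReal.tendsto_coe.2 hη).const_mul 2).mul_const (b - a)
  have hcauchy : UniformCauchySeqOn z atTop (Icc a b) := by
    rw [Metric.uniformCauchySeqOn_iff]
    intro ε hε
    obtain ⟨N, hN⟩ := (hlim.eventually_lt_const hε).exists
    exact ⟨N, fun m hm n hn s hs => (hbound N m n hm hn s hs).trans_lt hN⟩
  have hcomplete : ∀ s ∈ Icc a b, ∃ c, Tendsto (fun n => z n s) atTop (𝓝 c) := fun s hs =>
    cauchySeq_tendsto_of_complete (hcauchy.cauchySeq hs)
  choose! Z hZ using hcomplete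
  have hunif := hcauchy.tendstoUniformlyOn_of_tendsto hZ
  refine ⟨Z, tendsto_nhds_unique (hZ a (left_mem_Icc.2 hab)) (by simp [hza]),
    hunif.continuousOn (.of_forall hzc), hasDerivAt_of_tendstoUniformlyOn_regularized hη hunif hz⟩

lemma nonneg_of_hasDerivAt_sub_sqrt {g z : ℝ → ℝ} {a b : ℝ} (hg : ∀ s ∈ Ioo a b, 0 ≤ g s)
    (hzc : ContinuousOn z (Icc a b)) (hz : ∀ s ∈ Ioo a b, HasDerivAt z (g s - 2 * √(z s)) s)
    (ha : 0 ≤ z a) : ∀ s ∈ Icc a b, 0 ≤ z s :=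
  le_of_deriv_le_of_le_deriv (u := fun _ => 0) (fun s _ => antitone_sub_sqrt (g s))
    continuousOn_const hzc (fun s _ => hasDerivAt_const s 0) hz
    (fun s hs => by simpa using hg s hs) (fun _ _ => le_rfl) ha

lemma le_of_hasDerivAt_sub_sqrt {g z y : ℝ → ℝ} {a b : ℝ} (hzc : ContinuousOn z (Icc a b))
    (hyc : ContinuousOn y (Icc a b)) (hz : ∀ s ∈ Ioo a b, HasDerivAt z (g s - 2 * √(z s)) s)
    (hy : ∀ s ∈ Ioo a b, HasDerivAt y (g s - 2 * √(y s)) s) (ha : z a ≤ y a) :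
    ∀ s ∈ Icc a b, z s ≤ y s :=
  le_of_deriv_le_of_le_deriv (fun s _ => antitone_sub_sqrt (g s)) hzc hyc hz hy
    (fun _ _ => le_rfl) (fun _ _ => le_rfl) ha

lemma hasDerivAt_mul_sub_sq (k c s : ℝ) :
    HasDerivAt (fun s => (k * (s - c)) ^ 2) (2 * k ^ 2 * (s - c)) s :=
  ((((hasDerivAt_id s).sub_const c).const_mul k).pow 2).congr_deriv (by simp; ring)

lemma sqrt_le_mul_sub {g z : ℝ → ℝ} {a b c k : ℝ} (hk : ∀ s ∈ Icc a b, 0 ≤ k * (s - c))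
    (hg : ∀ s ∈ Ioo a b, g s ≤ 2 * (k ^ 2 + k) * (s - c)) (hzc : ContinuousOn z (Icc a b))
    (hz : ∀ s ∈ Ioo a b, HasDerivAt z (g s - 2 * √(z s)) s) (ha : z a ≤ (k * (a - c)) ^ 2) :
    ∀ s ∈ Icc a b, √(z s) ≤ k * (s - c) := fun s hs =>
  (Real.sqrt_le_left (hk s hs)).2 <| le_of_deriv_le_of_le_deriv
    (fun s _ => antitone_sub_sqrt (g s)) hzc (by fun_prop) hz
    (fun s _ => hasDerivAt_mul_sub_sq k c s) (fun _ _ => le_rfl) (fun s hs => by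
      rw [Real.sqrt_sq (hk s (Ioo_subset_Icc_self hs))]
      linarith [hg s hs]) ha s hs

lemma mul_sub_le_sqrt {g z : ℝ → ℝ} {a b c k : ℝ} (hk : ∀ s ∈ Icc a b, 0 ≤ k * (s - c))
    (hg : ∀ s ∈ Ioo a b, 2 * (k ^ 2 + k) * (s - c) ≤ g s) (hzc : ContinuousOn z (Icc a b))
    (hz : ∀ s ∈ Ioo a b, HasDerivAt z (g s - 2 * √(z s)) s) (ha : (k * (a - c)) ^ 2 ≤ z a) :
    ∀ s ∈ Icc a b, k * (s - c) ≤ √(z s) := fun s hs =>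
  Real.le_sqrt_of_sq_le <| le_of_deriv_le_of_le_deriv
    (fun s _ => antitone_sub_sqrt (g s)) (by fun_prop) hzc
    (fun s _ => hasDerivAt_mul_sub_sq k c s) hz (fun s hs => by
      rw [Real.sqrt_sq (hk s (Ioo_subset_Icc_self hs))]
      linarith [hg s hs]) (fun _ _ => le_rfl) ha s hs

/-! ### The squared negative part of a periodic solution -/

/-- `z` is the square of the negative part of a solution of the normal form equation, described by
the equation that this square satisfies. The positive part is the negative part of the reflected
solution `t ↦ -x (-t)`, which belongs to the forcing term `t ↦ -A (-t)`. -/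
structure IsNegPartSq (A z : ℝ → ℝ) : Prop where
  nonneg : ∀ t, 0 ≤ z t
  hasDerivAt : ∀ t, HasDerivAt z (2 * (A t)⁺ - 2 * √(z t)) t
  eq_zero : ∀ t, A t ≤ 0 → z t = 0

section

variable {A x y z : ℝ → ℝ}

lemma posPart_le_of_monotone_add_div (hA : Monotone fun t => A t + t / 4) {s n : ℝ} (hn : A n ≤ 0)
    (hsn : s ≤ n) : (A s)⁺ ≤ (n - s) / 4 := by
  have := hA hsn
  exact sup_le (by linarith) (by linarith)

lemma sqrt_le_half_sub (hA : Monotone fun t => A t + t / 4) {p n : ℝ} (hn : A n ≤ 0)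
    (hzc : ContinuousOn z (Icc p n))
    (hz : ∀ s ∈ Ioo p n, HasDerivAt z (2 * (A s)⁺ - 2 * √(z s)) s) (hp : z p = 0) :
    ∀ s ∈ Icc p n, √(z s) ≤ (n - s) / 2 := fun s hs => by
  have := sqrt_le_mul_sub (k := -1 / 2) (c := n) (fun s hs => by linarith [hs.2])
    (fun s hs => by linarith [posPart_le_of_monotone_add_div hA hn hs.2.le]) hzc hz
    (hp.trans_le (sq_nonneg _)) s hs
  linarith

lemma exists_periodic_eqOn {f : ℝ → ℝ} {T p : ℝ} (hT : 0 < T)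
    (hf : ∀ t ∈ Ioc p (p + T), f (t + T) = f t) :
    ∃ F : ℝ → ℝ, Function.Periodic F T ∧ EqOn F f (Ioc p (p + 2 * T)) := by
  refine ⟨fun t => f (toIocMod hT p t), fun t => by simp, fun t ht => ?_⟩
  rcases le_or_gt t (p + T) with htT | htT
  · simp [(toIocMod_eq_self hT).2 ⟨ht.1, htT⟩]
  · have hmem : t - T ∈ Ioc p (p + T) := ⟨by linarith, by linarith [ht.2]⟩
    simp [← toIocMod_sub hT p t, (toIocMod_eq_self hT).2 hmem, ← hf _ hmem]

lemma hasDerivAt_add_period {f : ℝ → ℝ} {T : ℝ} (hf : Function.Periodic f T) {f' t : ℝ} :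
    HasDerivAt f f' (t + T) ↔ HasDerivAt f f' t := by
  constructor <;> intro h
  · simpa only [hf _] using h.comp_add_const t T
  · rw [← add_sub_cancel_right t T] at h
    simpa only [hf.sub_eq] using h.comp_sub_const (t + T) T

lemma exists_negPartSq_Icc {a b : ℝ} (hab : a ≤ b) (hA : Continuous A)
    (hmono : Monotone fun t => A t + t / 4) :
    ∃ z : ℝ → ℝ, z a = 0 ∧ ContinuousOn z (Icc a b) ∧
      (∀ s ∈ Ioo a b, HasDerivAt z (2 * (A s)⁺ - 2 * √(z s)) s) ∧
      (∀ s ∈ Icc a b, 0 ≤ z s) ∧ ∀ s ∈ Icc a b, A s ≤ 0 → z s = 0 := by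
  obtain ⟨z, hza, hzc, hz⟩ := exists_hasDerivAt_sub_sqrt (g := fun t => 2 * (A t)⁺) hab
    (by fun_prop)
  have hz_nonneg := nonneg_of_hasDerivAt_sub_sqrt
    (fun s _ => mul_nonneg zero_le_two (posPart_nonneg _)) hzc hz hza.ge
  refine ⟨z, hza, hzc, hz, hz_nonneg, fun n hn hAn => ?_⟩
  have hle := sqrt_le_half_sub hmono hAn (hzc.mono (Icc_subset_Icc_right hn.2))
    (fun s hs => hz s (Ioo_subset_Ioo_right hn.2 hs)) hza n (right_mem_Icc.2 hn.1)
  rw [sub_self, zero_div] at hle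
  exact (Real.sqrt_eq_zero (hz_nonneg n hn)).1 (hle.antisymm (Real.sqrt_nonneg _))

lemma add_period_eq_of_hasDerivAt_sub_sqrt {g z : ℝ → ℝ} {T p : ℝ} (hT : 0 ≤ T)
    (hg : Function.Periodic g T) (hzc : ContinuousOn z (Icc p (p + 2 * T)))
    (hz : ∀ s ∈ Ioo p (p + 2 * T), HasDerivAt z (g s - 2 * √(z s)) s) (hzT : z (p + T) = z p) :
    ∀ t ∈ Icc p (p + T), z (t + T) = z t := by
  have hle : p + T ≤ p + 2 * T := by linarith
  have hzc₀ := hzc.mono (Icc_subset_Icc_right hle)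
  have hz₀ := fun s hs => hz s (Ioo_subset_Ioo_right hle hs)
  have hzc₁ : ContinuousOn (fun t => z (t + T)) (Icc p (p + T)) :=
    hzc.comp (by fun_prop) fun t ht => ⟨by linarith [ht.1], by linarith [ht.2]⟩
  have hz₁ : ∀ t ∈ Ioo p (p + T),
      HasDerivAt (fun t => z (t + T)) (g t - 2 * √(z (t + T))) t := fun t ht => by
    simpa only [hg t] using
      (hz (t + T) ⟨by linarith [ht.1], by linarith [ht.2]⟩).comp_add_const t T
  exact fun t ht => (le_of_hasDerivAt_sub_sqrt hzc₁ hzc₀ hz₁ hz₀ hzT.le t ht).antisymm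
    (le_of_hasDerivAt_sub_sqrt hzc₀ hzc₁ hz₀ hz₁ hzT.ge t ht)

lemma exists_periodic_isNegPartSq {T p : ℝ} (hT : 0 < T) (hA : Continuous A)
    (hmono : Monotone fun t => A t + t / 4) (hAper : Function.Periodic A T) (hp : A p ≤ 0) :
    ∃ z, Function.Periodic z T ∧ IsNegPartSq A z := by
  obtain ⟨z, hzp, hzc, hz, hz_nonneg, hz_zero⟩ :=
    exists_negPartSq_Icc (show p ≤ p + 2 * T by linarith) hA hmono
  have hzT : z (p + T) = z p :=
    (hz_zero _ ⟨by linarith, by linarith⟩ (by rwa [hAper])).trans hzp.symm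
  obtain ⟨F, hF, hFz⟩ := exists_periodic_eqOn hT fun t ht =>
    add_period_eq_of_hasDerivAt_sub_sqrt hT.le (fun t => by rw [hAper]) hzc hz hzT t
      (Ioc_subset_Icc_self ht)
  let P : ℝ → Prop := fun t => 0 ≤ F t ∧ HasDerivAt F (2 * (A t)⁺ - 2 * √(F t)) t ∧
    (A t ≤ 0 → F t = 0)
  have hP_per : Function.Periodic P T := fun t => by
    simp only [P, hasDerivAt_add_period hF, hF t, hAper t]
  have hP : ∀ t, P t := by
    intro t
    obtain ⟨s, hs, hts⟩ := hP_per.exists_mem_Ioc hT t p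
    rw [hts]
    have hs' : s ∈ Ioo p (p + 2 * T) := ⟨hs.1, by linarith [hs.2]⟩
    have hev : F =ᶠ[𝓝 s] z := hFz.eventuallyEq_of_mem
      (mem_of_superset (Ioo_mem_nhds hs'.1 hs'.2) Ioo_subset_Ioc_self)
    simp only [P, hev.hasDerivAt_iff, hev.eq_of_nhds]
    exact ⟨hz_nonneg s (Ioo_subset_Icc_self hs'), hz s hs', hz_zero s (Ioo_subset_Icc_self hs')⟩
  exact ⟨F, hF, fun t => (hP t).1, fun t => (hP t).2.1, fun t => (hP t).2.2⟩

lemma IsNegPartSq.pos (hz : IsNegPartSq A z) {t : ℝ} (ht : 0 < A t) : 0 < z t := by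
  refine (hz.nonneg t).lt_of_ne' fun h0 => ?_
  have hmin : IsLocalMin z t := .of_forall fun s => h0 ▸ hz.nonneg s
  have := hmin.hasDerivAt_eq_zero (hz.hasDerivAt t)
  rw [h0, Real.sqrt_zero, posPart_eq_self.2 ht.le] at this
  linarith

lemma IsNegPartSq.continuous (hz : IsNegPartSq A z) : Continuous z :=
  continuous_iff_continuousAt.2 fun t => (hz.hasDerivAt t).continuousAt

lemma IsNegPartSq.sqrt_le (hz : IsNegPartSq A z) (hmono : Monotone fun t => A t + t / 4)
    {p s n : ℝ} (hp : A p ≤ 0) (hn : A n ≤ 0) (hs : s ∈ Icc p n) : √(z s) ≤ (n - s) / 2 :=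
  sqrt_le_half_sub hmono hn hz.continuous.continuousOn (fun s _ => hz.hasDerivAt s)
    (hz.eq_zero p hp) s hs

/-! ### One-sided slopes at the zeros of the forcing term -/

lemma tendsto_nhds_of_eventually_le {ι : Type*} {l : Filter ι} {f : ι → ℝ} {c : ℝ}
    (hlow : ∀ k < c, ∀ᶠ i in l, k ≤ f i) (hup : ∀ k > c, ∀ᶠ i in l, f i ≤ k) :
    Tendsto f l (𝓝 c) := by
  refine tendsto_order.2 ⟨fun k hk => ?_, fun k hk => ?_⟩ <;>
    obtain ⟨m, hm₁, hm₂⟩ := exists_between hk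
  · exact (hlow m hm₂).mono fun i hi => hm₁.trans_le hi
  · exact (hup m hm₁).mono fun i hi => hi.trans_lt hm₂

lemma tendsto_posPart_div_right {f : ℝ → ℝ} {f' c : ℝ} (hf : HasDerivAt f f' c) (hc : f c = 0) :
    Tendsto (fun s => (f s)⁺ / (s - c)) (𝓝[>] c) (𝓝 f'⁺) := by
  have hslope := (hasDerivWithinAt_iff_tendsto_slope' self_notMem_Ioi).1
    (hf.hasDerivWithinAt (s := Ioi c))
  refine ((continuous_posPart.tendsto f').comp hslope).congr' ?_
  filter_upwards [self_mem_nhdsWithin] with s hs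
  have hs : 0 < s - c := sub_pos.2 hs
  simp only [Function.comp_apply, slope_def_field, hc, sub_zero, posPart_def]
  rw [← max_div_div_right hs.le, zero_div]

lemma tendsto_posPart_div_left {f : ℝ → ℝ} {f' c : ℝ} (hf : HasDerivAt f f' c) (hc : f c = 0) :
    Tendsto (fun s => (f s)⁺ / (c - s)) (𝓝[<] c) (𝓝 f'⁻) := by
  have hslope := (hasDerivWithinAt_iff_tendsto_slope' self_notMem_Iio).1
    (hf.hasDerivWithinAt (s := Iio c))
  refine ((continuous_negPart.tendsto f').comp hslope).congr' ?_
  filter_upwards [self_mem_nhdsWithin] with s hs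
  have hs : 0 < c - s := sub_pos.2 hs
  simp only [Function.comp_apply, slope_def_field, hc, sub_zero, posPart_def, negPart_def]
  rw [← max_div_div_right hs.le, zero_div, ← div_neg, neg_sub]

lemma IsNegPartSq.tendsto_right (hz : IsNegPartSq A z) {c α κ : ℝ} (hc : A c = 0)
    (hα : HasDerivAt A α c) (hκ : 0 ≤ κ) (hκα : κ ^ 2 + κ = α⁺) :
    Tendsto (fun s => √(z s) / (s - c)) (𝓝[>] c) (𝓝 κ) := by
  have hlim := tendsto_posPart_div_right hα hc
  have hzc : z c = 0 := hz.eq_zero c hc.le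
  refine tendsto_nhds_of_eventually_le (fun k hk => ?_) fun k hk => ?_
  · rcases lt_or_ge k 0 with hk0 | hk0
    · filter_upwards [self_mem_nhdsWithin] with s hs
      exact hk0.le.trans (div_nonneg (Real.sqrt_nonneg _) (sub_nonneg.2 (le_of_lt hs)))
    obtain ⟨b, hb, hsub⟩ := mem_nhdsGT_iff_exists_Ioo_subset.1
      (hlim.eventually_const_lt (show k ^ 2 + k < α⁺ by nlinarith))
    filter_upwards [Ioo_mem_nhdsGT hb] with s hs
    rw [le_div_iff₀ (sub_pos.2 hs.1)]
    refine mul_sub_le_sqrt (fun s hs => mul_nonneg hk0 (sub_nonneg.2 hs.1)) (fun s hs => ?_)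
      hz.continuous.continuousOn (fun s _ => hz.hasDerivAt s) (by simp [hzc]) s
      (Ioo_subset_Icc_self hs)
    linarith [(lt_div_iff₀ (sub_pos.2 hs.1)).1 (hsub hs)]
  · have hk0 : 0 ≤ k := hκ.trans hk.le
    obtain ⟨b, hb, hsub⟩ := mem_nhdsGT_iff_exists_Ioo_subset.1
      (hlim.eventually_lt_const (show α⁺ < k ^ 2 + k by nlinarith))
    filter_upwards [Ioo_mem_nhdsGT hb] with s hs
    rw [div_le_iff₀ (sub_pos.2 hs.1)]
    refine sqrt_le_mul_sub (fun s hs => mul_nonneg hk0 (sub_nonneg.2 hs.1)) (fun s hs => ?_)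
      hz.continuous.continuousOn (fun s _ => hz.hasDerivAt s) (by simp [hzc]) s
      (Ioo_subset_Icc_self hs)
    linarith [(div_lt_iff₀ (sub_pos.2 hs.1)).1 (hsub hs)]

/-- In the variable `-log (c - s)` the function `v` decreases at rate at least `δ`. -/
lemma exists_le_of_mul_deriv_le {v v' : ℝ → ℝ} {a c K δ : ℝ} (hac : a < c) (hδ : 0 < δ)
    (hv : ∀ s ∈ Ioo a c, HasDerivAt v (v' s) s)
    (h : ∀ s ∈ Ioo a c, K < v s → (c - s) * v' s ≤ -δ) : ∃ r ∈ Ioo a c, v r ≤ K := by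
  by_contra! hK
  have hd : ∀ s ∈ Ioo a c, HasDerivAt (fun s => v s - δ * Real.log (c - s))
      (v' s + δ / (c - s)) s := fun s hs =>
    ((hv s hs).sub ((((hasDerivAt_id s).const_sub c).log
      (sub_pos.2 hs.2).ne').const_mul δ)).congr_deriv (by simp; ring)
  have hanti : AntitoneOn (fun s => v s - δ * Real.log (c - s)) (Ioo a c) := by
    refine antitoneOn_of_hasDerivWithinAt_nonpos (f' := fun s => v' s + δ / (c - s))
      (convex_Ioo a c) (fun s hs => (hd s hs).continuousAt.continuousWithinAt)
      (fun s hs => (hd s (interior_subset hs)).hasDerivWithinAt) fun s hs => ?_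
    have hs := interior_subset hs
    have := (le_div_iff₀' (sub_pos.2 hs.2)).2 (h s hs (hK s hs))
    rw [neg_div] at this
    linarith
  have hlog : Tendsto (fun s => Real.log (c - s)) (𝓝[<] c) atBot := by
    refine Real.tendsto_log_nhdsGT_zero.comp (tendsto_nhdsWithin_iff.2 ⟨?_, ?_⟩)
    · exact (Continuous.tendsto' (by fun_prop) _ _ (sub_self c)).mono_left nhdsWithin_le_nhds
    · exact eventually_mem_nhdsWithin.mono fun s hs => mem_Ioi.2 (sub_pos.2 hs)
  obtain ⟨m, hm⟩ := nonempty_Ioo.2 hac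
  obtain ⟨s, hs, hms⟩ := ((hlog.eventually_lt_atBot
    ((K - (v m - δ * Real.log (c - m))) / δ)).and (Ioo_mem_nhdsLT hm.2)).exists
  have hsac : s ∈ Ioo a c := ⟨hm.1.trans hms.1, hms.2⟩
  have hle : v s - δ * Real.log (c - s) ≤ v m - δ * Real.log (c - m) := hanti hm hsac hms.1.le
  have hlt := (lt_div_iff₀' hδ).1 hs
  linarith [hK s hsac]

lemma eventually_le_of_mul_deriv_le {v v' : ℝ → ℝ} {c K δ : ℝ} (hδ : 0 < δ)
    (hv : ∀ s < c, HasDerivAt v (v' s) s)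
    (h : ∀ᶠ s in 𝓝[<] c, K < v s → (c - s) * v' s ≤ -δ) : ∀ᶠ s in 𝓝[<] c, v s ≤ K := by
  obtain ⟨a, hac, hsub⟩ := mem_nhdsLT_iff_exists_Ioo_subset.1 h
  obtain ⟨r, hr, hrK⟩ := exists_le_of_mul_deriv_le hac hδ (fun s hs => hv s hs.2) hsub
  filter_upwards [Ioo_mem_nhdsLT hr.2] with s hs
  have hd : ∀ u < c, HasDerivAt (fun u => v u - K) (v' u) u := fun u hu => (hv u hu).sub_const K
  refine sub_nonpos.1 (nonpos_of_hasDerivAt_nonpos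
    (fun u hu => (hd u (hu.2.trans_lt hs.2)).continuousAt.continuousWithinAt)
    (fun u hu => hd u (hu.2.trans hs.2)) (sub_nonpos.2 hrK) (fun u hu hKu => ?_) s
    (right_mem_Icc.2 hs.1.le))
  have huc := hu.2.trans hs.2
  have := hsub ⟨hr.1.trans hu.1, huc⟩ (sub_pos.1 hKu)
  nlinarith [sub_pos.2 huc]

lemma IsNegPartSq.hasDerivAt_div_sq (hz : IsNegPartSq A z) {s c : ℝ} (hs : s < c) :
    HasDerivAt (fun s => (√(z s) / (c - s)) ^ 2)
      (2 * ((A s)⁺ / (c - s) - √(z s) / (c - s) + (√(z s) / (c - s)) ^ 2) / (c - s)) s := by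
  have hcs : c - s ≠ 0 := (sub_pos.2 hs).ne'
  simp only [div_pow, Real.sq_sqrt (hz.nonneg _)]
  refine ((hz.hasDerivAt s).fun_div (((hasDerivAt_id s).const_sub c).fun_pow 2)
    (pow_ne_zero 2 hcs)).congr_deriv ?_
  simp only [id_eq]
  field_simp
  ring

lemma IsNegPartSq.eventually_le_div_left (hz : IsNegPartSq A z) {c α k : ℝ} (hc : A c = 0)
    (hα : HasDerivAt A α c) (hk : 0 ≤ k) (hk2 : k ≤ 1 / 2) (hkα : k - k ^ 2 < α⁻) :
    ∀ᶠ s in 𝓝[<] c, k ≤ √(z s) / (c - s) := by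
  have hu_nonneg : ∀ s < c, 0 ≤ √(z s) / (c - s) := fun s hs =>
    div_nonneg (Real.sqrt_nonneg _) (sub_pos.2 hs).le
  obtain ⟨γ, hγ, hγα⟩ := exists_between hkα
  have hev : ∀ᶠ s in 𝓝[<] c, -(√(z s) / (c - s)) ^ 2 ≤ -k ^ 2 := by
    refine eventually_le_of_mul_deriv_le (mul_pos two_pos (sub_pos.2 hγ))
      (fun s hs => (hz.hasDerivAt_div_sq hs).fun_neg) ?_
    filter_upwards [(tendsto_posPart_div_left hα hc).eventually_const_lt hγα,
      self_mem_nhdsWithin] with s hs hsc hlt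
    have huk := (sq_lt_sq₀ (hu_nonneg s hsc) hk).1 (neg_lt_neg_iff.1 hlt)
    rw [mul_neg, mul_div_cancel₀ _ (sub_pos.2 hsc).ne']
    nlinarith
  filter_upwards [hev, self_mem_nhdsWithin] with s hs hsc
  exact (sq_le_sq₀ hk (hu_nonneg s hsc)).1 (neg_le_neg_iff.1 hs)

lemma IsNegPartSq.eventually_div_left_le (hz : IsNegPartSq A z) {c α k : ℝ} (hc : A c = 0)
    (hα : HasDerivAt A α c) (hk : 0 ≤ k) (hkα : α⁻ < k - k ^ 2)
    (hle : ∀ᶠ s in 𝓝[<] c, √(z s) / (c - s) ≤ 1 / 2) :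
    ∀ᶠ s in 𝓝[<] c, √(z s) / (c - s) ≤ k := by
  have hu_nonneg : ∀ s < c, 0 ≤ √(z s) / (c - s) := fun s hs =>
    div_nonneg (Real.sqrt_nonneg _) (sub_pos.2 hs).le
  obtain ⟨γ, hαγ, hγ⟩ := exists_between hkα
  have hev : ∀ᶠ s in 𝓝[<] c, (√(z s) / (c - s)) ^ 2 ≤ k ^ 2 := by
    refine eventually_le_of_mul_deriv_le (mul_pos two_pos (sub_pos.2 hγ))
      (fun s hs => hz.hasDerivAt_div_sq hs) ?_
    filter_upwards [(tendsto_posPart_div_left hα hc).eventually_lt_const hαγ, hle,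
      self_mem_nhdsWithin] with s hs hus hsc hlt
    have huk := (sq_lt_sq₀ hk (hu_nonneg s hsc)).1 hlt
    rw [mul_div_cancel₀ _ (sub_pos.2 hsc).ne']
    nlinarith
  filter_upwards [hev, self_mem_nhdsWithin] with s hs hsc
  exact (sq_le_sq₀ (hu_nonneg s hsc) hk).1 hs

lemma IsNegPartSq.tendsto_left (hz : IsNegPartSq A z) {c α l : ℝ} (hc : A c = 0)
    (hα : HasDerivAt A α c) (hl : 0 ≤ l) (hl2 : l ≤ 1 / 2) (hlα : l - l ^ 2 = α⁻)
    (hle : ∀ᶠ s in 𝓝[<] c, √(z s) ≤ (c - s) / 2) :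
    Tendsto (fun s => √(z s) / (c - s)) (𝓝[<] c) (𝓝 l) := by
  have hu_le : ∀ᶠ s in 𝓝[<] c, √(z s) / (c - s) ≤ 1 / 2 := by
    filter_upwards [hle, self_mem_nhdsWithin] with s hs hsc
    rw [div_le_iff₀ (sub_pos.2 hsc)]
    linarith
  refine tendsto_nhds_of_eventually_le (fun k hk => ?_) fun k hk => ?_
  · rcases lt_or_ge k 0 with hk0 | hk0
    · filter_upwards [self_mem_nhdsWithin] with s hs
      exact hk0.le.trans (div_nonneg (Real.sqrt_nonneg _) (sub_nonneg.2 (le_of_lt hs)))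
    · exact hz.eventually_le_div_left hc hα hk0 (hk.le.trans hl2) (by nlinarith)
  · rcases le_or_gt (1 / 2) k with hk2 | hk2
    · exact hu_le.mono fun s hs => hs.trans hk2
    · exact hz.eventually_div_left_le hc hα (hl.trans hk.le) (by nlinarith) hu_le

lemma IsNegPartSq.hasDerivWithinAt_sqrt_right (hz : IsNegPartSq A z) {c α κ : ℝ} (hc : A c = 0)
    (hα : HasDerivAt A α c) (hκ : 0 ≤ κ) (hκα : κ ^ 2 + κ = α⁺) :
    HasDerivWithinAt (fun s => √(z s)) κ (Ici c) c := by
  rw [← hasDerivWithinAt_Ioi_iff_Ici, hasDerivWithinAt_iff_tendsto_slope' self_notMem_Ioi]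
  simpa [slope_fun_def_field, hz.eq_zero c hc.le] using hz.tendsto_right hc hα hκ hκα

lemma IsNegPartSq.hasDerivWithinAt_sqrt_left (hz : IsNegPartSq A z) {c α l : ℝ} (hc : A c = 0)
    (hα : HasDerivAt A α c) (hl : 0 ≤ l) (hl2 : l ≤ 1 / 2) (hlα : l - l ^ 2 = α⁻)
    (hle : ∀ᶠ s in 𝓝[<] c, √(z s) ≤ (c - s) / 2) :
    HasDerivWithinAt (fun s => √(z s)) (-l) (Iic c) c := by
  rw [← hasDerivWithinAt_Iio_iff_Iic, hasDerivWithinAt_iff_tendsto_slope' self_notMem_Iio]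
  refine (hz.tendsto_left hc hα hl hl2 hlα hle).neg.congr fun s => ?_
  rw [slope_def_field, hz.eq_zero c hc.le, Real.sqrt_zero, sub_zero, ← div_neg, neg_sub]

/-! ### Solutions of the normal form equation -/

/-- `x` is a solution on `ℝ` of the normal form `x x' = A(t) + x` of the Abel equation. -/
def IsNFSolution (A x : ℝ → ℝ) : Prop :=
  Differentiable ℝ x ∧ ∀ t, x t * deriv x t = A t + x t

lemma IsNFSolution.of_hasDerivAt (h : ∀ t, ∃ x', HasDerivAt x x' t ∧ x t * x' = A t + x t) :
    IsNFSolution A x := by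
  choose x' hx' hode using h
  exact ⟨fun t => (hx' t).differentiableAt, fun t => (hx' t).deriv ▸ hode t⟩

lemma IsNFSolution.reflect (hx : IsNFSolution A x) :
    IsNFSolution (fun t => -A (-t)) (fun t => -x (-t)) := by
  refine .of_hasDerivAt fun t => ⟨_, (HasDerivAt.scomp t (hx.1 (-t)).hasDerivAt
    (hasDerivAt_neg t)).neg, ?_⟩
  simp only [smul_eq_mul]
  linarith [hx.2 (-t)]

lemma monotone_add_div_four (hA : Differentiable ℝ A) (hd : ∀ t, -(1 / 4) ≤ deriv A t) :
    Monotone fun t => A t + t / 4 := by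
  have h (t : ℝ) : HasDerivAt (fun t => A t + t / 4) (deriv A t + 1 / 4) t :=
    (hA t).hasDerivAt.add ((hasDerivAt_id t).div_const 4)
  refine monotone_of_deriv_nonneg (fun t => (h t).differentiableAt) fun t => ?_
  rw [(h t).deriv]
  linarith [hd t]

lemma monotone_reflect_add_div_four (hA : Monotone fun t => A t + t / 4) :
    Monotone fun t => -A (-t) + t / 4 := fun s t hst => by
  have := hA (neg_le_neg hst)
  dsimp only at this ⊢
  linarith

lemma periodic_reflect {f : ℝ → ℝ} {T : ℝ} (hf : Function.Periodic f T) :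
    Function.Periodic (fun t => -f (-t)) T := fun t => by
  simp only [neg_add, ← sub_eq_add_neg, hf.sub_eq]

lemma IsNegPartSq.eventually_sqrt_le {T c : ℝ} (hz : IsNegPartSq A z)
    (hmono : Monotone fun t => A t + t / 4) (hT : 0 < T) (hAper : Function.Periodic A T)
    (hc : A c = 0) : ∀ᶠ s in 𝓝[<] c, √(z s) ≤ (c - s) / 2 := by
  filter_upwards [Ioo_mem_nhdsLT (sub_lt_self c hT)] with s hs
  exact hz.sqrt_le hmono (by rw [hAper.sub_eq, hc]) hc.le (Ioo_subset_Icc_self hs)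

lemma IsNegPartSq.hasDerivAt_sub_sqrt_of_pos {v : ℝ → ℝ} {t : ℝ} (hz : IsNegPartSq A z)
    (hv : ∀ s, 0 ≤ A s → v s = 0) (hA : ContinuousAt A t) (ht : 0 < A t) :
    HasDerivAt (fun s => √(v s) - √(z s)) (1 - A t / √(z t)) t := by
  have hpos := Real.sqrt_pos.2 (hz.pos ht)
  refine (((hz.hasDerivAt t).sqrt (hz.pos ht).ne').neg.congr_deriv ?_).congr_of_eventuallyEq ?_
  · rw [posPart_eq_self.2 ht.le]
    field_simp
    ring
  · filter_upwards [hA.eventually_const_lt ht] with s hs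
    simp [hv s hs.le]

lemma exists_sq_add_self_eq {c : ℝ} (hc : 0 ≤ c) : ∃ κ, 0 ≤ κ ∧ κ ^ 2 + κ = c := by
  have h1 : 1 ≤ √(1 + 4 * c) := Real.one_le_sqrt.2 (by linarith)
  have h2 := Real.sq_sqrt (show 0 ≤ 1 + 4 * c by linarith)
  exact ⟨(√(1 + 4 * c) - 1) / 2, by linarith, by linarith⟩

lemma exists_sub_sq_eq {c : ℝ} (hc : 0 ≤ c) (hc4 : c ≤ 1 / 4) :
    ∃ l, 0 ≤ l ∧ l ≤ 1 / 2 ∧ l - l ^ 2 = c := by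
  have h1 : √(1 - 4 * c) ≤ 1 := Real.sqrt_le_one.2 (by linarith)
  have h2 := Real.sq_sqrt (show 0 ≤ 1 - 4 * c by linarith)
  exact ⟨(1 - √(1 - 4 * c)) / 2, by linarith, by linarith [Real.sqrt_nonneg (1 - 4 * c)],
    by linarith⟩

lemma hasDerivAt_of_Iic_of_Ici {f : ℝ → ℝ} {f' t : ℝ} (hl : HasDerivWithinAt f f' (Iic t) t)
    (hr : HasDerivWithinAt f f' (Ici t) t) : HasDerivAt f f' t := by
  simpa [Iic_union_Ici] using hl.union hr

/-- Both one-sided derivatives are the difference of the slope of approach and the slope of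
departure, which depend only on the derivative of `A`. -/
lemma exists_hasDerivAt_sub_sqrt_of_eq_zero {T t : ℝ} (hT : 0 < T) (hA : Differentiable ℝ A)
    (hd : ∀ t, -(1 / 4) ≤ deriv A t) (hAper : Function.Periodic A T) (hz : IsNegPartSq A z)
    (hy : IsNegPartSq (fun t => -A (-t)) y) (ht : A t = 0) :
    ∃ x', HasDerivAt (fun s => √(y (-s)) - √(z s)) x' t := by
  have hmono := monotone_add_div_four hA hd
  have ht' : -A (- -t) = 0 := by rw [neg_neg, ht, neg_zero]
  have hα := (hA t).hasDerivAt
  have hα' : HasDerivAt (fun s => -A (-s)) (deriv A t) (-t) := by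
    have hα_neg : HasDerivAt A (deriv A t) (- -t) := by rwa [neg_neg]
    simpa using (hα_neg.scomp (-t) (hasDerivAt_neg (-t))).fun_neg
  obtain ⟨κ, hκ, hκα⟩ := exists_sq_add_self_eq (posPart_nonneg (deriv A t))
  obtain ⟨l, hl, hl2, hlα⟩ := exists_sub_sq_eq (negPart_nonneg (deriv A t))
    (sup_le (by linarith [hd t]) (by norm_num))
  have hzr := hz.hasDerivWithinAt_sqrt_right ht hα hκ hκα
  have hzl := hz.hasDerivWithinAt_sqrt_left ht hα hl hl2 hlα
    (hz.eventually_sqrt_le hmono hT hAper ht)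
  have hyl := HasDerivWithinAt.scomp t (hy.hasDerivWithinAt_sqrt_right ht' hα' hκ hκα)
    (hasDerivAt_neg t).hasDerivWithinAt (fun s hs => mem_Ici.2 (neg_le_neg hs))
  have hyr := HasDerivWithinAt.scomp t (hy.hasDerivWithinAt_sqrt_left ht' hα' hl hl2 hlα
    (hy.eventually_sqrt_le (monotone_reflect_add_div_four hmono) hT (periodic_reflect hAper) ht'))
    (hasDerivAt_neg t).hasDerivWithinAt (fun s hs => mem_Iic.2 (neg_le_neg hs))
  exact ⟨l - κ, hasDerivAt_of_Iic_of_Ici ((hyl.sub hzl).congr_deriv (by simp; ring))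
    ((hyr.sub hzr).congr_deriv (by simp))⟩

lemma isNFSolution_sub_sqrt {T : ℝ} (hT : 0 < T) (hA : Differentiable ℝ A)
    (hd : ∀ t, -(1 / 4) ≤ deriv A t) (hAper : Function.Periodic A T) (hz : IsNegPartSq A z)
    (hy : IsNegPartSq (fun t => -A (-t)) y) :
    IsNFSolution A fun t => √(y (-t)) - √(z t) := by
  have hy_zero (s : ℝ) (hs : 0 ≤ A s) : y (-s) = 0 := hy.eq_zero (-s) (by simpa using hs)
  have hAc := hA.continuous
  refine .of_hasDerivAt fun t => ?_
  rcases lt_trichotomy (A t) 0 with ht | ht | ht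
  · have hy_pos := Real.sqrt_pos.2 (hy.pos (t := -t) (by simpa using ht))
    have hd' := hy.hasDerivAt_sub_sqrt_of_pos (v := fun s => z (-s)) (t := -t)
      (fun s hs => hz.eq_zero _ (by simpa using hs)) (by fun_prop) (by simpa using ht)
    refine ⟨_, ((HasDerivAt.scomp t hd' (hasDerivAt_neg t)).neg.congr_of_eventuallyEq
      (.of_forall fun s => by simp)), ?_⟩
    simp only [hz.eq_zero t ht.le, Real.sqrt_zero, sub_zero, neg_neg, smul_eq_mul]
    field_simp
    ring
  · obtain ⟨x', hx'⟩ := exists_hasDerivAt_sub_sqrt_of_eq_zero hT hA hd hAper hz hy ht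
    exact ⟨x', hx', by simp [hz.eq_zero t ht.le, hy_zero t ht.ge, ht]⟩
  · have hz_pos := Real.sqrt_pos.2 (hz.pos ht)
    refine ⟨_, hz.hasDerivAt_sub_sqrt_of_pos hy_zero hAc.continuousAt ht, ?_⟩
    rw [hy_zero t ht.le, Real.sqrt_zero]
    field_simp
    ring

/-! ### Uniqueness -/

lemma IsNFSolution.eq_zero (hx : IsNFSolution A x) {c : ℝ} (hc : x c = 0) : A c = 0 := by
  simpa [hc, eq_comm] using hx.2 c

lemma IsNFSolution.hasDerivAt_negPart_sq (hx : IsNFSolution A x) (t : ℝ) :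
    HasDerivAt (fun t => ((x t)⁻) ^ 2) (-(2 * (x t)⁻ * deriv x t)) t := by
  simpa [Function.comp_def] using (hasDerivAt_posPart_sq (-x t)).comp t (hx.1 t).hasDerivAt.fun_neg

lemma IsNFSolution.deriv_negPart_sq (hx : IsNFSolution A x) {t : ℝ} (ht : x t ≤ 0) :
    deriv (fun t => ((x t)⁻) ^ 2) t = 2 * A t - 2 * (x t)⁻ := by
  rw [(hx.hasDerivAt_negPart_sq t).deriv, negPart_eq_neg.2 ht]
  linarith [hx.2 t]

lemma IsNFSolution.deriv_negPart_sq_le (hx : IsNFSolution A x) (t : ℝ) :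
    deriv (fun t => ((x t)⁻) ^ 2) t ≤ 2 * (A t)⁺ - 2 * (x t)⁻ := by
  rcases le_total (x t) 0 with ht | ht
  · rw [hx.deriv_negPart_sq ht]
    gcongr
    exact le_posPart _
  · simp [(hx.hasDerivAt_negPart_sq t).deriv, negPart_eq_zero.2 ht]

lemma IsNFSolution.negPart_le_sqrt (hx : IsNFSolution A x) (hz : IsNegPartSq A z) {c t : ℝ}
    (hc : x c = 0) (hct : c ≤ t) : (x t)⁻ ≤ √(z t) :=
  Real.le_sqrt_of_sq_le <| le_of_deriv_le_of_le_deriv (u := fun t => ((x t)⁻) ^ 2)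
    (fun s _ => antitone_sub_sqrt (2 * (A s)⁺))
    (fun s _ => (hx.hasDerivAt_negPart_sq s).continuousAt.continuousWithinAt)
    hz.continuous.continuousOn
    (fun s _ => (hx.hasDerivAt_negPart_sq s).differentiableAt.hasDerivAt)
    (fun s _ => hz.hasDerivAt s)
    (fun s _ => by
      rw [Real.sqrt_sq (negPart_nonneg _)]
      exact hx.deriv_negPart_sq_le s)
    (fun _ _ => le_rfl) (by simpa [hc] using hz.nonneg c) t (right_mem_Icc.2 hct)

lemma IsNFSolution.isNegPartSq (hx : IsNFSolution A x) (hneg : ∀ t, A t ≤ 0 → 0 ≤ x t)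
    (hpos : ∀ t, 0 ≤ A t → x t ≤ 0) : IsNegPartSq A fun t => ((x t)⁻) ^ 2 where
  nonneg _ := sq_nonneg _
  hasDerivAt t := by
    refine (hx.hasDerivAt_negPart_sq t).differentiableAt.hasDerivAt.congr_deriv ?_
    rw [Real.sqrt_sq (negPart_nonneg _)]
    rcases le_total (A t) 0 with ht | ht
    · simp [(hx.hasDerivAt_negPart_sq t).deriv, negPart_eq_zero.2 (hneg t ht),
        posPart_eq_zero.2 ht]
    · rw [hx.deriv_negPart_sq (hpos t ht), posPart_eq_self.2 ht]
  eq_zero t ht := by simp [negPart_eq_zero.2 (hneg t ht)]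

lemma IsNegPartSq.eq_of_le (hz : IsNegPartSq A z) (hy : IsNegPartSq A y) {p t : ℝ}
    (hp : A p ≤ 0) (hpt : p ≤ t) : z t = y t := by
  have hle {z y : ℝ → ℝ} (hz : IsNegPartSq A z) (hy : IsNegPartSq A y) : z t ≤ y t :=
    le_of_hasDerivAt_sub_sqrt hz.continuous.continuousOn hy.continuous.continuousOn
      (fun s _ => hz.hasDerivAt s) (fun s _ => hy.hasDerivAt s)
      (by rw [hz.eq_zero p hp, hy.eq_zero p hp]) t (right_mem_Icc.2 hpt)
  exact (hle hz hy).antisymm (hle hy hz)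

lemma exists_le_eq_of_periodic {f : ℝ → ℝ} {T : ℝ} (hT : 0 < T) (hf : Function.Periodic f T)
    (c t : ℝ) : ∃ p ≤ t, f p = f c := by
  obtain ⟨p, hp, hpc⟩ := hf.exists_mem_Ioc hT c (t - T)
  exact ⟨p, by linarith [hp.2], hpc.symm⟩

lemma IsNFSolution.negPart_le_sqrt_of_periodic {T c : ℝ} (hx : IsNFSolution A x) (hT : 0 < T)
    (hx_per : Function.Periodic x T) (hc : x c = 0) (hz : IsNegPartSq A z) (t : ℝ) :
    (x t)⁻ ≤ √(z t) := by
  obtain ⟨p, hpt, hp⟩ := exists_le_eq_of_periodic hT hx_per c t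
  exact hx.negPart_le_sqrt hz (hp.trans hc) hpt

lemma IsNFSolution.nonneg_of_periodic {T c : ℝ} (hx : IsNFSolution A x) (hT : 0 < T)
    (hx_per : Function.Periodic x T) (hc : x c = 0) (hz : IsNegPartSq A z) {t : ℝ}
    (ht : A t ≤ 0) : 0 ≤ x t := by
  have := hx.negPart_le_sqrt_of_periodic hT hx_per hc hz t
  rw [hz.eq_zero t ht, Real.sqrt_zero] at this
  exact negPart_eq_zero.1 (this.antisymm (negPart_nonneg _))

lemma IsNFSolution.negPart_eq_sqrt {T c : ℝ} (hx : IsNFSolution A x) (hT : 0 < T)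
    (hx_per : Function.Periodic x T) (hc : x c = 0) (hz : IsNegPartSq A z)
    (hy : IsNegPartSq (fun t => -A (-t)) y) (t : ℝ) : (x t)⁻ = √(z t) := by
  have hpos (s : ℝ) (hs : 0 ≤ A s) : x s ≤ 0 := by
    simpa using hx.reflect.nonneg_of_periodic (c := -c) (t := -s) hT (periodic_reflect hx_per)
      (by simpa using hc) hy (by simpa using hs)
  have hxz := hx.isNegPartSq (fun s hs => hx.nonneg_of_periodic hT hx_per hc hz hs) hpos
  obtain ⟨p, hpt, hp⟩ := exists_le_eq_of_periodic hT hx_per c t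
  rw [← hxz.eq_of_le hz (hx.eq_zero (hp.trans hc)).le hpt, Real.sqrt_sq (negPart_nonneg _)]

lemma IsNFSolution.eq_sub_sqrt {T c : ℝ} (hx : IsNFSolution A x) (hT : 0 < T)
    (hx_per : Function.Periodic x T) (hc : x c = 0) (hz : IsNegPartSq A z)
    (hy : IsNegPartSq (fun t => -A (-t)) y) (t : ℝ) : x t = √(y (-t)) - √(z t) := by
  have hpos := hx.reflect.negPart_eq_sqrt (c := -c) (z := y) (y := z) hT (periodic_reflect hx_per)
    (by simpa using hc) hy (by simpa using hz) (-t)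
  rw [neg_neg, negPart_neg] at hpos
  rw [← hpos, ← hx.negPart_eq_sqrt hT hx_per hc hz hy t, posPart_sub_negPart]

lemma exists_eq_zero_of_intervalIntegral_eq_zero {f : ℝ → ℝ} {a b : ℝ} (hab : a < b)
    (hf : Continuous f) (hint : ∫ t in a..b, f t = 0) : ∃ c ∈ Ioo a b, f c = 0 :=
  exists_hasDerivAt_eq_zero (f := fun t => ∫ s in a..t, f s) hab (by fun_prop) (by simp [hint])
    fun t _ => (hf.integral_hasStrictDerivAt a t).hasDerivAt

lemma IsNFSolution.exists_eq_zero {a b : ℝ} (hx : IsNFSolution A x) (hab : a < b)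
    (hA : Continuous A) (hint : ∫ t in a..b, A t = 0) (hxab : x a = x b) :
    ∃ c ∈ Ioo a b, x c = 0 := by
  have hd (t : ℝ) : HasDerivAt (fun t => x t ^ 2 / 2 - ∫ s in a..t, A s) (x t) t := by
    refine ((((hx.1 t).hasDerivAt.fun_pow 2).div_const 2).fun_sub
      (hA.integral_hasStrictDerivAt a t).hasDerivAt).congr_deriv ?_
    linear_combination hx.2 t
  exact exists_hasDerivAt_eq_zero hab (fun t _ => (hd t).continuousAt.continuousWithinAt)
    (by simp [hint, hxab]) fun t _ => hd t

end

lemma sInf_deriv_le_of_periodic {f : ℝ → ℝ} {T : ℝ} (hT : 0 < T) (hf : ContDiff ℝ 1 f)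
    (hper : Function.Periodic f T) (t : ℝ) :
    sInf ((fun t => deriv f t) '' Icc (0 : ℝ) T) ≤ deriv f t := by
  have hper' : Function.Periodic (deriv f) T := fun t => by
    rw [← deriv_comp_add_const, funext hper]
  obtain ⟨s, hs, hts⟩ := hper'.exists_mem_Ico₀ hT t
  rw [hts]
  exact csInf_le (isCompact_Icc.image hf.continuous_deriv_one).bddBelow
    (mem_image_of_mem _ (Ico_subset_Icc_self hs))

theorem normal_form_unique_periodic_solution_general {T : ℝ} (hT : 0 < T) {A : ℝ → ℝ}
    (hA : Differentiable ℝ A) (hAper : Function.Periodic A T) (hd : ∀ t, -(1 / 4) ≤ deriv A t)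
    (hint : ∫ t in (0 : ℝ)..T, A t = 0) :
    ∃! x : ℝ → ℝ, Differentiable ℝ x ∧ Function.Periodic x T ∧
      (∀ t : ℝ, x t * deriv x t = A t + x t) := by
  have hAc := hA.continuous
  have hmono := monotone_add_div_four hA hd
  obtain ⟨p, -, hp⟩ := exists_eq_zero_of_intervalIntegral_eq_zero hT hAc hint
  obtain ⟨z, hz_per, hz⟩ := exists_periodic_isNegPartSq hT hAc hmono hAper hp.le
  obtain ⟨y, hy_per, hy⟩ := exists_periodic_isNegPartSq (A := fun t => -A (-t)) (p := -p) hT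
    (by fun_prop) (monotone_reflect_add_div_four hmono) (periodic_reflect hAper) (by simp [hp])
  have hsol := isNFSolution_sub_sqrt hT hA hd hAper hz hy
  refine ⟨fun t => √(y (-t)) - √(z t), ⟨hsol.1, fun t => ?_, hsol.2⟩, ?_⟩
  · simp only [neg_add, ← sub_eq_add_neg, hy_per.sub_eq, hz_per t]
  · rintro x ⟨hx_diff, hx_per, hode⟩
    have hx : IsNFSolution A x := ⟨hx_diff, hode⟩
    obtain ⟨c, -, hc⟩ := hx.exists_eq_zero hT hAc hint hx_per.eq.symm
    exact funext (hx.eq_sub_sqrt hT hx_per hc hz hy)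

/-- if A is C¹, T-periodic, has a zero in [0,T], min A′ > −1/4, all zeros of A
are simple, and ∫₀ᵀ A = 0, then (NF): x·x′ = A(t) + x has exactly one T-periodic solution. -/
theorem normal_form_unique_periodic_solution
    (T : ℝ) (hT : 0 < T) (A : ℝ → ℝ) (hA : ContDiff ℝ 1 A)
    (hAper : Function.Periodic A T)
    (hzero : ∃ t ∈ Icc (0 : ℝ) T, A t = 0)
    (hmin : sInf ((fun t => deriv A t) '' Icc (0 : ℝ) T) > -(1 / 4))
    (hsimple : ∀ t : ℝ, A t = 0 → deriv A t ≠ 0)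
    (hint : ∫ t in (0 : ℝ)..T, A t = 0) :
    ∃! x : ℝ → ℝ, Differentiable ℝ x ∧ Function.Periodic x T ∧
      (∀ t : ℝ, x t * deriv x t = A t + x t) :=
  normal_form_unique_periodic_solution_general hT (hA.differentiable one_ne_zero) hAper
    (fun t => hmin.le.trans (sInf_deriv_le_of_periodic hT hA hAper t)) hint
end

section
/- Let A: ℝ → ℝ be C¹ and let tᵢ ∈ ℝ satisfy A(tᵢ) = 0 and A′(tᵢ) < −1/4. Then there is no C¹ function x defined on an open interval containing tᵢ that solves the normal form equation (NF) and satisfies x(tᵢ) = 0. -/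
/-!
Along a solution with `x(tᵢ) = 0`, let `c` be the right derivative of `x` at `tᵢ`. The function
`y = x² / 2` has derivative `A + x`, which vanishes at `tᵢ` with right derivative `A′(tᵢ) + c`.
Comparing derivatives with those of `(t - tᵢ)²` shows that `y / (t - tᵢ)²` tends to
`(A′(tᵢ) + c) / 2` from the right. It also tends to `c² / 2`, hence `c² = A′(tᵢ) + c`, a quadratic
in `c` with discriminant `1 + 4 A′(tᵢ) < 0`.
-/

open Set Filter Topology

lemma tendsto_div_sub_of_hasDerivWithinAt {𝕜 : Type*} [NontriviallyNormedField 𝕜] {f : 𝕜 → 𝕜}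
    {s : Set 𝕜} {a m : 𝕜} (hf : HasDerivWithinAt f m s a) (ha : a ∉ s) (hfa : f a = 0) :
    Tendsto (fun t ↦ f t / (t - a)) (𝓝[s] a) (𝓝 m) := by
  simpa only [slope_fun_def_field, hfa, sub_zero] using
    (hasDerivWithinAt_iff_tendsto_slope' ha).mp hf

lemma tendsto_div_sq_nhdsGT {y f : ℝ → ℝ} {a m : ℝ} (hy : Tendsto y (𝓝[>] a) (𝓝 0))
    (hyf : ∀ᶠ t in 𝓝[>] a, HasDerivAt y (f t) t) (hf : HasDerivWithinAt f m (Ioi a) a)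
    (hfa : f a = 0) : Tendsto (fun t ↦ y t / (t - a) ^ 2) (𝓝[>] a) (𝓝 (m / 2)) := by
  have hsq_deriv (t : ℝ) : HasDerivAt (fun s ↦ (s - a) ^ 2) (2 * (t - a)) t := by
    simpa using ((hasDerivAt_id t).sub_const a).fun_pow 2
  have hsq_zero : Tendsto (fun t ↦ (t - a) ^ 2) (𝓝[>] a) (𝓝 0) := by
    simpa using (hsq_deriv a).continuousAt.tendsto.mono_left nhdsWithin_le_nhds
  have hsq_deriv_ne : ∀ᶠ t in 𝓝[>] a, 2 * (t - a) ≠ 0 := by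
    filter_upwards [self_mem_nhdsWithin] with t ht
    exact mul_ne_zero two_ne_zero (sub_ne_zero.mpr (ne_of_gt ht))
  refine HasDerivAt.lhopital_zero_nhdsGT hyf (.of_forall hsq_deriv) hsq_deriv_ne hy hsq_zero ?_
  simpa only [div_div, mul_comm] using
    (tendsto_div_sub_of_hasDerivWithinAt hf self_notMem_Ioi hfa).div_const 2

lemma sq_eq_add_of_normal_form {A x x' : ℝ → ℝ} {t₀ α c : ℝ}
    (hAt₀ : A t₀ = 0) (hA : HasDerivWithinAt A α (Ioi t₀) t₀)
    (hxt₀ : x t₀ = 0) (hx : HasDerivWithinAt x c (Ioi t₀) t₀)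
    (hx' : ∀ᶠ t in 𝓝[>] t₀, HasDerivAt x (x' t) t)
    (hNF : ∀ᶠ t in 𝓝[>] t₀, x t * x' t = A t + x t) : c ^ 2 = α + c := by
  have henergy_deriv : ∀ᶠ t in 𝓝[>] t₀, HasDerivAt (fun s ↦ x s ^ 2 / 2) (A t + x t) t := by
    filter_upwards [hx', hNF] with t hxt hNFt
    refine ((hxt.fun_pow 2).div_const 2).congr_deriv ?_
    rw [← hNFt]
    ring
  have henergy_zero : Tendsto (fun t ↦ x t ^ 2 / 2) (𝓝[>] t₀) (𝓝 0) := by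
    simpa [hxt₀] using (hx.continuousWithinAt.tendsto.pow 2).div_const 2
  have hlim_NF : Tendsto (fun t ↦ x t ^ 2 / 2 / (t - t₀) ^ 2) (𝓝[>] t₀) (𝓝 ((α + c) / 2)) :=
    tendsto_div_sq_nhdsGT henergy_zero henergy_deriv (hA.add hx) (by simp [hAt₀, hxt₀])
  have hlim_slope : Tendsto (fun t ↦ x t ^ 2 / 2 / (t - t₀) ^ 2) (𝓝[>] t₀) (𝓝 (c ^ 2 / 2)) := by
    simpa only [div_pow, div_right_comm] using
      ((tendsto_div_sub_of_hasDerivWithinAt hx self_notMem_Ioi hxt₀).pow 2).div_const 2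
  linarith [tendsto_nhds_unique hlim_slope hlim_NF]

theorem normal_form_condition_sharp_general {A : ℝ → ℝ} {ti α : ℝ} (hAti : A ti = 0)
    (hA : HasDerivWithinAt A α (Ioi ti) ti) (hα : α < -(1 / 4)) :
    ¬ ∃ (b : ℝ) (x : ℝ → ℝ), ti < b ∧
      DifferentiableOn ℝ x (Ico ti b) ∧
      (∀ t ∈ Ioo ti b, x t * deriv x t = A t + x t) ∧
      x ti = 0 := by
  rintro ⟨b, x, hb, hx, hNF, hxti⟩
  have hright : Ioo ti b ∈ 𝓝[>] ti := Ioo_mem_nhdsGT hb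
  have hx_ti : HasDerivWithinAt x (derivWithin x (Ico ti b) ti) (Ioi ti) ti :=
    (hx ti (left_mem_Ico.mpr hb)).hasDerivWithinAt.mono_of_mem_nhdsWithin
      (mem_of_superset hright Ioo_subset_Ico_self)
  have hx' : ∀ᶠ t in 𝓝[>] ti, HasDerivAt x (deriv x t) t := by
    filter_upwards [hright] with t ht
    exact (hx.differentiableAt (Ico_mem_nhds ht.1 ht.2)).hasDerivAt
  have hquadratic := sq_eq_add_of_normal_form hAti hA hxti hx_ti hx' (mem_of_superset hright hNF)
  nlinarith [sq_nonneg (derivWithin x (Ico ti b) ti - 1 / 2)]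

/-- if A(tᵢ) = 0 and A′(tᵢ) < −1/4, then no C¹ function defined on an open
interval containing tᵢ solves (NF): x·x′ = A(t) + x and vanishes at tᵢ.
This shows the condition min A′ > −1/4 is sharp. -/
theorem normal_form_condition_sharp
    (A : ℝ → ℝ) (hA : ContDiff ℝ 1 A) (ti : ℝ)
    (hAti : A ti = 0) (hA' : deriv A ti < -(1 / 4)) :
    ¬ ∃ (a b : ℝ) (x : ℝ → ℝ), a < ti ∧ ti < b ∧
      ContDiffOn ℝ 1 x (Ioo a b) ∧
      (∀ t ∈ Ioo a b, x t * deriv x t = A t + x t) ∧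
      x ti = 0 := by
  rintro ⟨a, b, x, ha, hb, hx, hNF, hxti⟩
  exact normal_form_condition_sharp_general hAti
    (hA.differentiable one_ne_zero ti).hasDerivAt.hasDerivWithinAt hA'
    ⟨b, x, hb, (hx.differentiableOn one_ne_zero).mono (Ico_subset_Ioo_left ha),
      fun t ht ↦ hNF t (Ioo_subset_Ioo_left ha.le ht), hxti⟩
end
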